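/- arXiv:2207.06129 — 2 statements merged into one kernel-verified Lean document; each statement's English description precedes it below -/
import Mathlib

section
/- Let 1 < p < ∞ and w ∈ A_p, and let M be the Hardy–Littlewood maximal operator. Suppose ψ₁ and ψ₂ are positive functions on ℝⁿ × (0,∞) for which there is a constant C > 0, independent of a and r, with ∫_r^∞ ψ₁(a,t) dt/t ≤ C·ψ₂(a,r) for every (a,r) ∈ ℝⁿ × (0,∞). Then M is bounded from M^{p,w}_{ψ₁} to M^{p,w}_{ψ₂}: there is C' > 0 such that ‖Mf‖_{M^{p,w}_{ψ₂}} ≤ C'·‖f‖_{M^{p,w}_{ψ₁}} for every f ∈ M^{p,w}_{ψ₁}. -/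
open MeasureTheory Metric Set
open scoped ENNReal

noncomputable section

/-- The weighted measure of a set: `w(E) = ∫_E w(x) dx`, valued in `ℝ≥0∞`. -/
def wSet {n : ℕ} (w : EuclideanSpace ℝ (Fin n) → ℝ)
    (E : Set (EuclideanSpace ℝ (Fin n))) : ℝ≥0∞ :=
  ∫⁻ x in E, ENNReal.ofReal (w x)

/-- The weighted Lebesgue norm `‖f‖_{L^{p,w}(Ω)} = (∫_Ω |f(x)|^p w(x) dx)^{1/p}`. -/
def wLp {n : ℕ} (p : ℝ) (w f : EuclideanSpace ℝ (Fin n) → ℝ)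
    (Ω : Set (EuclideanSpace ℝ (Fin n))) : ℝ≥0∞ :=
  (∫⁻ x in Ω, ENNReal.ofReal |f x| ^ p * ENNReal.ofReal (w x)) ^ (1 / p)

/-- The weighted Lebesgue norm for an `ℝ≥0∞`-valued function. -/
def wLpE {n : ℕ} (p : ℝ) (w : EuclideanSpace ℝ (Fin n) → ℝ)
    (g : EuclideanSpace ℝ (Fin n) → ℝ≥0∞) (Ω : Set (EuclideanSpace ℝ (Fin n))) : ℝ≥0∞ :=
  (∫⁻ x in Ω, g x ^ p * ENNReal.ofReal (w x)) ^ (1 / p)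

/-- The weak weighted Lebesgue norm `‖f‖_{WL^{p,w}(Ω)} = sup_{γ>0} γ·w({x ∈ Ω : |f(x)| > γ})^{1/p}`. -/
def wWeakLp {n : ℕ} (p : ℝ) (w f : EuclideanSpace ℝ (Fin n) → ℝ)
    (Ω : Set (EuclideanSpace ℝ (Fin n))) : ℝ≥0∞ :=
  ⨆ γ : Set.Ioi (0 : ℝ),
    ENNReal.ofReal γ.1 * (wSet w {x | x ∈ Ω ∧ γ.1 < |f x|}) ^ (1 / p)

/-- The weak weighted Lebesgue norm for an `ℝ≥0∞`-valued function. -/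
def wWeakLpE {n : ℕ} (p : ℝ) (w : EuclideanSpace ℝ (Fin n) → ℝ)
    (g : EuclideanSpace ℝ (Fin n) → ℝ≥0∞) (Ω : Set (EuclideanSpace ℝ (Fin n))) : ℝ≥0∞ :=
  ⨆ γ : Set.Ioi (0 : ℝ),
    ENNReal.ofReal γ.1 * (wSet w {x | x ∈ Ω ∧ ENNReal.ofReal γ.1 < g x}) ^ (1 / p)

/-- `f ∈ L^{p,w}_loc`: `f` is measurable and `‖f‖_{L^{p,w}(B)} < ∞` on every ball. -/
def MemLocWLp {n : ℕ} (p : ℝ) (w f : EuclideanSpace ℝ (Fin n) → ℝ) : Prop :=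
  Measurable f ∧ ∀ (a : EuclideanSpace ℝ (Fin n)) (r : ℝ), 0 < r → wLp p w f (ball a r) < ⊤

/-- A weight: nonnegative, measurable, locally integrable, positive a.e. -/
def IsWeight {n : ℕ} (w : EuclideanSpace ℝ (Fin n) → ℝ) : Prop :=
  Measurable w ∧ (∀ x, 0 ≤ w x) ∧ LocallyIntegrable w volume ∧ ∀ᵐ x ∂volume, 0 < w x

/-- The Muckenhoupt class `A_p` for `1 < p`. -/
def MuckAp {n : ℕ} (p : ℝ) (w : EuclideanSpace ℝ (Fin n) → ℝ) : Prop :=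
  ∃ C : ℝ, 0 < C ∧ ∀ (a : EuclideanSpace ℝ (Fin n)) (r : ℝ), 0 < r →
    ((volume (ball a r))⁻¹ * ∫⁻ x in ball a r, ENNReal.ofReal (w x)) *
      ((volume (ball a r))⁻¹ *
        ∫⁻ x in ball a r, ENNReal.ofReal (w x ^ (-(1 / (p - 1))))) ^ (p - 1) ≤
      ENNReal.ofReal C

/-- The Muckenhoupt class `A_1`. -/
def MuckA1 {n : ℕ} (w : EuclideanSpace ℝ (Fin n) → ℝ) : Prop :=
  ∃ C : ℝ, 0 < C ∧ ∀ (a : EuclideanSpace ℝ (Fin n)) (r : ℝ), 0 < r →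
    ((volume (ball a r))⁻¹ * ∫⁻ x in ball a r, ENNReal.ofReal (w x)) *
      essSup (fun x => ENNReal.ofReal (w x)⁻¹) (volume.restrict (ball a r)) ≤
      ENNReal.ofReal C

/-- The class `A_{p,q}` for `1 < p`, where `p'` is the conjugate exponent of `p`. -/
def MuckApq {n : ℕ} (p q p' : ℝ) (w : EuclideanSpace ℝ (Fin n) → ℝ) : Prop :=
  ∃ C : ℝ, 0 < C ∧ ∀ (a : EuclideanSpace ℝ (Fin n)) (r : ℝ), 0 < r →
    ((volume (ball a r))⁻¹ * ∫⁻ x in ball a r, ENNReal.ofReal (w x ^ q)) ^ (1 / q) *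
      ((volume (ball a r))⁻¹ * ∫⁻ x in ball a r, ENNReal.ofReal (w x ^ (-p'))) ^ (1 / p') ≤
      ENNReal.ofReal C

/-- The class `A_{1,q}`. -/
def MuckA1q {n : ℕ} (q : ℝ) (w : EuclideanSpace ℝ (Fin n) → ℝ) : Prop :=
  ∃ C : ℝ, 0 < C ∧ ∀ (a : EuclideanSpace ℝ (Fin n)) (r : ℝ), 0 < r →
    ((volume (ball a r))⁻¹ * ∫⁻ x in ball a r, ENNReal.ofReal (w x ^ q)) ^ (1 / q) *
      essSup (fun x => ENNReal.ofReal (w x)⁻¹) (volume.restrict (ball a r)) ≤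
      ENNReal.ofReal C

/-- The Hardy–Littlewood maximal operator. -/
def HLMax {n : ℕ} (f : EuclideanSpace ℝ (Fin n) → ℝ)
    (x : EuclideanSpace ℝ (Fin n)) : ℝ≥0∞ :=
  ⨆ r : Set.Ioi (0 : ℝ), (volume (ball x r.1))⁻¹ * ∫⁻ y in ball x r.1, ENNReal.ofReal |f y|

/-- The fractional integral operator `I_α` (applied to `|f|`, valued in `ℝ≥0∞`). -/
def fracIntE {n : ℕ} (α : ℝ) (f : EuclideanSpace ℝ (Fin n) → ℝ)
    (x : EuclideanSpace ℝ (Fin n)) : ℝ≥0∞ :=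
  ∫⁻ y, ENNReal.ofReal |f y| / ENNReal.ofReal (dist x y ^ ((n : ℝ) - α))

/-- The fractional maximal operator `M_α`. -/
def fracMax {n : ℕ} (α : ℝ) (f : EuclideanSpace ℝ (Fin n) → ℝ)
    (x : EuclideanSpace ℝ (Fin n)) : ℝ≥0∞ :=
  ⨆ r : Set.Ioi (0 : ℝ),
    (volume (ball x r.1)) ^ (α / (n : ℝ) - 1) * ∫⁻ y in ball x r.1, ENNReal.ofReal |f y|

/-- The generalized weighted Morrey norm `‖f‖_{M^{p,w}_ψ}`. -/
def morreyNorm {n : ℕ} (p : ℝ) (w : EuclideanSpace ℝ (Fin n) → ℝ)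
    (ψ : EuclideanSpace ℝ (Fin n) → ℝ → ℝ) (f : EuclideanSpace ℝ (Fin n) → ℝ) : ℝ≥0∞ :=
  ⨆ (a : EuclideanSpace ℝ (Fin n)) (r : Set.Ioi (0 : ℝ)),
    (ENNReal.ofReal (ψ a r.1))⁻¹ * wSet w (ball a r.1) ^ (-(1 / p)) * wLp p w f (ball a r.1)

/-- The generalized weighted Morrey norm for an `ℝ≥0∞`-valued function. -/
def morreyNormE {n : ℕ} (p : ℝ) (w : EuclideanSpace ℝ (Fin n) → ℝ)
    (ψ : EuclideanSpace ℝ (Fin n) → ℝ → ℝ) (g : EuclideanSpace ℝ (Fin n) → ℝ≥0∞) : ℝ≥0∞ :=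
  ⨆ (a : EuclideanSpace ℝ (Fin n)) (r : Set.Ioi (0 : ℝ)),
    (ENNReal.ofReal (ψ a r.1))⁻¹ * wSet w (ball a r.1) ^ (-(1 / p)) * wLpE p w g (ball a r.1)

/-- The generalized weighted weak Morrey norm `‖f‖_{WM^{p,w}_ψ}`. -/
def morreyWeakNorm {n : ℕ} (p : ℝ) (w : EuclideanSpace ℝ (Fin n) → ℝ)
    (ψ : EuclideanSpace ℝ (Fin n) → ℝ → ℝ) (f : EuclideanSpace ℝ (Fin n) → ℝ) : ℝ≥0∞ :=
  ⨆ (a : EuclideanSpace ℝ (Fin n)) (r : Set.Ioi (0 : ℝ)),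
    (ENNReal.ofReal (ψ a r.1))⁻¹ * wSet w (ball a r.1) ^ (-(1 / p)) * wWeakLp p w f (ball a r.1)

/-- The generalized weighted weak Morrey norm for an `ℝ≥0∞`-valued function. -/
def morreyWeakNormE {n : ℕ} (p : ℝ) (w : EuclideanSpace ℝ (Fin n) → ℝ)
    (ψ : EuclideanSpace ℝ (Fin n) → ℝ → ℝ) (g : EuclideanSpace ℝ (Fin n) → ℝ≥0∞) : ℝ≥0∞ :=
  ⨆ (a : EuclideanSpace ℝ (Fin n)) (r : Set.Ioi (0 : ℝ)),
    (ENNReal.ofReal (ψ a r.1))⁻¹ * wSet w (ball a r.1) ^ (-(1 / p)) * wWeakLpE p w g (ball a r.1)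

end

section Abstract

variable {n : ℕ}

/-- countable-radius centred maximal function with respect to a measure -/
noncomputable def MD (μ : Measure (EuclideanSpace ℝ (Fin n))) (g : EuclideanSpace ℝ (Fin n) → ℝ≥0∞)
    (x : EuclideanSpace ℝ (Fin n)) : ℝ≥0∞ :=
  ⨆ k : ℤ, (μ (ball x ((2:ℝ)^k)))⁻¹ * ∫⁻ y in ball x ((2:ℝ)^k), g y ∂μ

lemma measurable_ball_lintegral (μ : Measure (EuclideanSpace ℝ (Fin n))) [SFinite μ] {g : (EuclideanSpace ℝ (Fin n)) → ℝ≥0∞}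
    (hg : Measurable g) (r : ℝ) : Measurable (fun x => ∫⁻ y in ball x r, g y ∂μ) := by
  have h1 : ∀ x, ∫⁻ y in ball x r, g y ∂μ
      = ∫⁻ y, ({q : (EuclideanSpace ℝ (Fin n)) × (EuclideanSpace ℝ (Fin n)) | dist q.2 q.1 < r}.indicator (fun q => g q.2)) (x, y) ∂μ := by
    intro x
    rw [← lintegral_indicator measurableSet_ball]
    apply lintegral_congr
    intro y
    simp [Set.indicator, mem_ball]
  simp_rw [h1]
  apply Measurable.lintegral_prod_right'
  apply Measurable.indicator (hg.comp measurable_snd)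
  exact measurableSet_lt (measurable_snd.dist measurable_fst) measurable_const

lemma measurable_MD (μ : Measure (EuclideanSpace ℝ (Fin n))) [SFinite μ] {g : (EuclideanSpace ℝ (Fin n)) → ℝ≥0∞}
    (hg : Measurable g) : Measurable (MD μ g) := by
  unfold MD
  refine Measurable.iSup fun k => ?_
  refine Measurable.mul ?_ (measurable_ball_lintegral μ hg _)
  have := measurable_ball_lintegral μ (g := fun _ => 1) measurable_const ((2:ℝ)^k)
  simp at this
  exact this.inv

lemma MD_weak (μ : Measure (EuclideanSpace ℝ (Fin n))) (D : ℝ≥0∞)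
    (hD : ∀ x r, 0 < r → μ (ball x (6 * r)) ≤ D * μ (ball x r))
    (g : (EuclideanSpace ℝ (Fin n)) → ℝ≥0∞) (l : ℝ≥0∞) : l * μ {x | l < MD μ g x} ≤ D * ∫⁻ y, g y ∂μ := by
  let S : ℕ → Set (EuclideanSpace ℝ (Fin n)) := fun R => {x | ∃ k : ℤ, (2:ℝ)^k ≤ R ∧
    l * μ (ball x ((2:ℝ)^k)) ≤ ∫⁻ y in ball x ((2:ℝ)^k), g y ∂μ}
  have hmono : Monotone S := by
    intro a b hab x ⟨k, hk, hk'⟩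
    exact ⟨k, hk.trans (by exact_mod_cast hab), hk'⟩
  have hsub : {x | l < MD μ g x} ⊆ ⋃ R, S R := by
    intro x hx
    obtain ⟨k, hk⟩ := lt_iSup_iff.1 (show l < ⨆ k : ℤ, _ from hx)
    obtain ⟨R, hR⟩ := exists_nat_ge ((2:ℝ)^k)
    refine mem_iUnion.2 ⟨R, k, hR, ?_⟩
    rw [mul_comm]
    rw [mul_comm, ← div_eq_mul_inv] at hk
    rw [mul_comm]
    exact ENNReal.mul_le_of_le_div hk.le
  have key : ∀ R, l * μ (S R) ≤ D * ∫⁻ y, g y ∂μ := by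
    intro R
    have hch : ∀ x : (EuclideanSpace ℝ (Fin n)), ∃ r : ℝ, x ∈ S R → 0 < r ∧ r ≤ R ∧
        l * μ (ball x r) ≤ ∫⁻ y in ball x r, g y ∂μ := by
      intro x
      by_cases hx : x ∈ S R
      · obtain ⟨k, hk, hk'⟩ := hx
        exact ⟨(2:ℝ)^k, fun _ => ⟨by positivity, hk, hk'⟩⟩
      · exact ⟨0, fun h => absurd h hx⟩
    choose r hr using hch
    obtain ⟨u, hu, hdis, hcov⟩ :=
      Vitali.exists_disjoint_subfamily_covering_enlargement_closedBall (S R) id r R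
        (fun a ha => (hr a ha).2.1) 5 (by norm_num)
    have hdis' : u.PairwiseDisjoint (fun a => ball a (r a)) :=
      hdis.mono (fun a => ball_subset_closedBall)
    have hcount : u.Countable := hdis'.countable_of_isOpen (fun _ _ => isOpen_ball)
      (fun a ha => ⟨a, mem_ball_self (hr a (hu ha)).1⟩)
    have hc : S R ⊆ ⋃ b ∈ u, ball b (6 * r b) := by
      intro x hx
      obtain ⟨b, hb, hxb⟩ := hcov x hx
      refine mem_iUnion₂.2 ⟨b, hb, ?_⟩
      have h0 := (hr b (hu hb)).1
      have : x ∈ closedBall b (5 * r b) := hxb (mem_closedBall_self (hr x hx).1.le)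
      exact closedBall_subset_ball (by linarith) this
    calc l * μ (S R) ≤ l * ∑' b : u, μ (ball (b:(EuclideanSpace ℝ (Fin n))) (6 * r b)) := by
          gcongr
          exact (measure_mono hc).trans (measure_biUnion_le _ hcount _)
      _ ≤ l * ∑' b : u, D * μ (ball (b:(EuclideanSpace ℝ (Fin n))) (r b)) := by
          gcongr with b
          exact hD _ _ (hr b (hu b.2)).1
      _ = D * ∑' b : u, l * μ (ball (b:(EuclideanSpace ℝ (Fin n))) (r b)) := by
          rw [ENNReal.tsum_mul_left, ENNReal.tsum_mul_left]; ring
      _ ≤ D * ∑' b : u, ∫⁻ y in ball (b:(EuclideanSpace ℝ (Fin n))) (r b), g y ∂μ := by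
          gcongr with b
          exact (hr b (hu b.2)).2.2
      _ = D * ∫⁻ y in ⋃ b ∈ u, ball b (r b), g y ∂μ := by
          rw [lintegral_biUnion hcount (fun _ _ => measurableSet_ball) hdis']
      _ ≤ _ := by
          gcongr
          exact Measure.restrict_le_self
  calc l * μ {x | l < MD μ g x} ≤ l * μ (⋃ R, S R) := by gcongr
    _ = ⨆ R, l * μ (S R) := by rw [hmono.measure_iUnion, ENNReal.mul_iSup]
    _ ≤ _ := iSup_le key

lemma MD_weak' (μ : Measure (EuclideanSpace ℝ (Fin n))) (D : ℝ≥0∞)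
    (hD : ∀ x r, 0 < r → μ (ball x (6 * r)) ≤ D * μ (ball x r))
    (g : (EuclideanSpace ℝ (Fin n)) → ℝ≥0∞) (hg : Measurable g) (l : ℝ≥0∞) (hl : l ≠ ⊤) :
    l * μ {x | 2 * l < MD μ g x} ≤ D * ∫⁻ y, {y | l < g y}.indicator g y ∂μ := by
  refine le_trans ?_ (MD_weak μ D hD ({y | l < g y}.indicator g) l)
  refine mul_le_mul' le_rfl (measure_mono ?_)
  intro x hx
  have h1 : MD μ g x ≤ MD μ ({y | l < g y}.indicator g) x + l := by
    refine iSup_le fun k => ?_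
    calc (μ (ball x ((2:ℝ)^k)))⁻¹ * ∫⁻ y in ball x ((2:ℝ)^k), g y ∂μ
        ≤ (μ (ball x ((2:ℝ)^k)))⁻¹ * ∫⁻ y in ball x ((2:ℝ)^k),
            ({y | l < g y}.indicator g y + l) ∂μ := by
          gcongr with y
          by_cases hy : l < g y
          · simp [Set.indicator, hy]
          · simp [Set.indicator, hy]; exact not_lt.1 hy
      _ = (μ (ball x ((2:ℝ)^k)))⁻¹ * ∫⁻ y in ball x ((2:ℝ)^k),
            ({y | l < g y}.indicator g y) ∂μ +
            l * ((μ (ball x ((2:ℝ)^k)))⁻¹ * μ (ball x ((2:ℝ)^k))) := by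
          rw [lintegral_add_right _ measurable_const, setLIntegral_const]; ring
      _ ≤ _ := by
          gcongr
          · exact le_iSup (fun k : ℤ => (μ (ball x ((2:ℝ)^k)))⁻¹ * ∫⁻ y in ball x ((2:ℝ)^k),
              ({y | l < g y}.indicator g y) ∂μ) k
          · exact mul_le_of_le_one_right' (ENNReal.inv_mul_le_one _)
  have h2 : 2 * l < MD μ g x := hx
  have h3 := h2.trans_le h1
  rw [two_mul] at h3
  exact (ENNReal.add_lt_add_iff_right hl).1 h3

lemma layer (s : ℝ) (hs : 0 < s) (y : ℝ≥0∞) :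
    ∫⁻ l in Ioi (0:ℝ), {l : ℝ | ENNReal.ofReal l < y}.indicator
      (fun l => ENNReal.ofReal (l ^ (s-1))) l = y ^ s / ENNReal.ofReal s := by
  have fin : ∀ t : ℝ, 0 ≤ t → ∫⁻ l in Ioi (0:ℝ), {l : ℝ | ENNReal.ofReal l < ENNReal.ofReal t}.indicator
      (fun l => ENNReal.ofReal (l ^ (s-1))) l = ENNReal.ofReal t ^ s / ENNReal.ofReal s := by
    intro t ht
    have hm : MeasurableSet {l : ℝ | ENNReal.ofReal l < ENNReal.ofReal t} :=
      measurableSet_lt ENNReal.measurable_ofReal measurable_const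
    rw [lintegral_indicator hm, Measure.restrict_restrict hm]
    have : {l : ℝ | ENNReal.ofReal l < ENNReal.ofReal t} ∩ Ioi 0 = Ioo 0 t := by
      ext l
      simp only [mem_inter_iff, mem_ofPred_eq, mem_Ioi, mem_Ioo]
      constructor
      · rintro ⟨h1, h2⟩
        exact ⟨h2, (ENNReal.ofReal_lt_ofReal_iff_of_nonneg h2.le).1 h1⟩
      · rintro ⟨h1, h2⟩
        exact ⟨(ENNReal.ofReal_lt_ofReal_iff_of_nonneg h1.le).2 h2, h1⟩
    rw [this, setLIntegral_congr Ioo_ae_eq_Ioc]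
    have hi : IntegrableOn (fun l : ℝ => l ^ (s-1)) (Ioc 0 t) := by
      rw [← intervalIntegrable_iff_integrableOn_Ioc_of_le ht]
      exact intervalIntegral.intervalIntegrable_rpow' (by linarith)
    rw [← ofReal_integral_eq_lintegral_ofReal hi, ← intervalIntegral.integral_of_le ht,
      integral_rpow (Or.inl (by linarith))]
    · rw [sub_add_cancel, Real.zero_rpow hs.ne', sub_zero, ENNReal.ofReal_div_of_pos hs,
        ENNReal.ofReal_rpow_of_nonneg ht hs.le]
    · filter_upwards [ae_restrict_mem measurableSet_Ioc] with l hl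
      exact Real.rpow_nonneg hl.1.le _
  by_cases hy : y = ⊤
  · subst hy
    rw [ENNReal.top_rpow_of_pos hs, ENNReal.top_div_of_ne_top ENNReal.ofReal_ne_top]
    rw [eq_top_iff]
    refine ENNReal.le_of_forall_nnreal_lt fun c _ => ?_
    have := fin ((c * s) ^ (1/s)) (by positivity)
    rw [ENNReal.ofReal_rpow_of_nonneg (by positivity) hs.le, ← Real.rpow_mul (by positivity),
      one_div, inv_mul_cancel₀ hs.ne', Real.rpow_one, ← ENNReal.ofReal_div_of_pos hs,
      mul_div_cancel_right₀ _ hs.ne', ENNReal.ofReal_coe_nnreal] at this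
    rw [← this]
    apply lintegral_mono
    intro l
    apply Set.indicator_le_indicator_of_subset
    · intro l hl; simp
    · simp
  · have := fin y.toReal ENNReal.toReal_nonneg
    rwa [ENNReal.ofReal_toReal hy] at this

lemma MD_strong (μ : Measure (EuclideanSpace ℝ (Fin n))) [SFinite μ] (D : ℝ≥0∞)
    (hD : ∀ x r, 0 < r → μ (ball x (6 * r)) ≤ D * μ (ball x r))
    (q : ℝ) (hq : 1 < q)
    (g : (EuclideanSpace ℝ (Fin n)) → ℝ≥0∞) (hg : Measurable g) :
    ∫⁻ x, (MD μ g x) ^ q ∂μ ≤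
      (2 ^ q * ENNReal.ofReal q * D / ENNReal.ofReal (q - 1)) * ∫⁻ x, g x ^ q ∂μ := by
  have hq0 : 0 < q := by linarith
  have hM := measurable_MD μ hg
  have hqne : ENNReal.ofReal q ≠ 0 := by simp [hq0]
  have hmeas : Measurable (fun z : (EuclideanSpace ℝ (Fin n)) × ℝ => {z : (EuclideanSpace ℝ (Fin n)) × ℝ | ENNReal.ofReal z.2 < MD μ g z.1 / 2}.indicator
      (fun z => ENNReal.ofReal (z.2 ^ (q-1))) z) := by
    apply Measurable.indicator
    · fun_prop
    · exact measurableSet_lt (by fun_prop) (by fun_prop)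
  have hmeas2 : Measurable (fun z : ℝ × (EuclideanSpace ℝ (Fin n)) => {z : ℝ × (EuclideanSpace ℝ (Fin n)) | ENNReal.ofReal z.1 < g z.2}.indicator
      (fun z => ENNReal.ofReal (z.1 ^ (q-1-1)) * g z.2) z) := by
    apply Measurable.indicator
    · fun_prop
    · exact measurableSet_lt (by fun_prop) (by fun_prop)
  have e1 : ∫⁻ x, (MD μ g x) ^ q ∂μ = 2 ^ q * ENNReal.ofReal q * ∫⁻ x, (∫⁻ l in Ioi (0:ℝ),
      {l : ℝ | ENNReal.ofReal l < MD μ g x / 2}.indicator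
      (fun l => ENNReal.ofReal (l ^ (q-1))) l) ∂μ := by
    simp_rw [layer q hq0]
    rw [← lintegral_const_mul _ (by fun_prop)]
    apply lintegral_congr
    intro x
    rw [ENNReal.div_rpow_of_nonneg _ _ hq0.le, mul_assoc, ENNReal.mul_div_cancel hqne ENNReal.ofReal_ne_top,
      ENNReal.mul_div_cancel (by simp) (by simp [hq0.le])]
  have e2 : ∫⁻ x, (∫⁻ l in Ioi (0:ℝ),
      {l : ℝ | ENNReal.ofReal l < MD μ g x / 2}.indicator
      (fun l => ENNReal.ofReal (l ^ (q-1))) l) ∂μ =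
      ∫⁻ l in Ioi (0:ℝ), ENNReal.ofReal (l ^ (q-1)) * μ {x | 2 * ENNReal.ofReal l < MD μ g x} := by
    rw [lintegral_lintegral_swap]
    · apply lintegral_congr
      intro l
      rw [← setLIntegral_const, ← lintegral_indicator]
      · apply lintegral_congr
        intro x
        simp only [Set.indicator, mem_ofPred_eq]
        congr 1
        rw [ENNReal.lt_div_iff_mul_lt (by simp) (by simp), mul_comm]
      · exact measurableSet_lt measurable_const hM
    · exact hmeas.aemeasurable
  have e3 : ∫⁻ l in Ioi (0:ℝ), ENNReal.ofReal (l ^ (q-1)) * μ {x | 2 * ENNReal.ofReal l < MD μ g x} ≤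
      ∫⁻ l in Ioi (0:ℝ), D * ∫⁻ y, {y | ENNReal.ofReal l < g y}.indicator
        (fun y => ENNReal.ofReal (l ^ (q-1-1)) * g y) y ∂μ := by
    apply setLIntegral_mono' measurableSet_Ioi
    intro l hl
    have hl : 0 < l := hl
    have h := MD_weak' μ D hD g hg (ENNReal.ofReal l) ENNReal.ofReal_ne_top
    have h1 : l ^ (q-1) = l ^ (q-1-1) * l := by
      rw [← Real.rpow_add_one hl.ne']; congr 1; ring
    rw [h1, ENNReal.ofReal_mul (by positivity), mul_assoc]
    refine (mul_le_mul' le_rfl h).trans (le_of_eq ?_)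
    rw [mul_left_comm, ← lintegral_const_mul]
    · congr 1
      apply lintegral_congr
      intro y
      simp only [Set.indicator]
      split_ifs <;> simp
    · exact hg.indicator (measurableSet_lt measurable_const hg)
  have e4 : ∫⁻ l in Ioi (0:ℝ), D * ∫⁻ y, {y | ENNReal.ofReal l < g y}.indicator
        (fun y => ENNReal.ofReal (l ^ (q-1-1)) * g y) y ∂μ =
      D * ∫⁻ y, g y ^ q / ENNReal.ofReal (q-1) ∂μ := by
    rw [lintegral_const_mul]
    · congr 1
      rw [lintegral_lintegral_swap]
      · apply lintegral_congr
        intro y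
        have h := layer (q-1) (by linarith) (g y)
        have h2 : g y ^ q / ENNReal.ofReal (q-1) = g y * (g y ^ (q-1) / ENNReal.ofReal (q-1)) := by
          rw [← mul_div_assoc]
          congr 1
          conv_lhs => rw [show q = 1 + (q-1) by ring]
          rw [ENNReal.rpow_add_of_nonneg _ _ (by norm_num) (by linarith), ENNReal.rpow_one]
        rw [h2, ← h, ← lintegral_const_mul]
        · apply lintegral_congr
          intro l
          simp only [Set.indicator, mem_ofPred_eq]
          split_ifs
          · rw [mul_comm]
          · simp
        · exact (by fun_prop : Measurable (fun l : ℝ => ENNReal.ofReal (l ^ (q-1-1)))).indicator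
            (measurableSet_lt ENNReal.measurable_ofReal measurable_const)
      · exact hmeas2.aemeasurable
    · exact hmeas2.lintegral_prod_right'
  rw [e1, e2]
  refine (mul_le_mul' le_rfl (e3.trans_eq e4)).trans (le_of_eq ?_)
  simp_rw [div_eq_mul_inv]
  rw [lintegral_mul_const _ (by fun_prop)]
  ring

structure ApPair (p : ℝ) (A : ℝ≥0∞) (W S : EuclideanSpace ℝ (Fin n) → ℝ≥0∞) : Prop where
  hp : 1 < p
  hA : A ≠ ⊤
  mW : Measurable W
  mS : Measurable S
  aeW : ∀ᵐ x ∂(volume : Measure (EuclideanSpace ℝ (Fin n))), W x ≠ 0 ∧ W x ≠ ⊤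
  aeS : ∀ᵐ x ∂(volume : Measure (EuclideanSpace ℝ (Fin n))), S x = W x ^ (-(1 / (p - 1)))
  fin : ∀ a r, (∫⁻ x in ball a r, W x) ≠ ⊤
  ap : ∀ a r, 0 < r → (∫⁻ x in ball a r, W x) * (∫⁻ x in ball a r, S x) ^ (p - 1) ≤
    A * volume (ball a r) ^ p

namespace ApPair

variable {p : ℝ} {A : ℝ≥0∞} {W S : EuclideanSpace ℝ (Fin n) → ℝ≥0∞}

lemma aeS' (H : ApPair p A W S) : ∀ᵐ x ∂(volume : Measure (EuclideanSpace ℝ (Fin n))), S x ≠ 0 ∧ S x ≠ ⊤ := by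
  filter_upwards [H.aeW, H.aeS] with x h1 h2
  rw [h2]
  have := H.hp
  constructor
  · exact (ENNReal.rpow_pos (pos_iff_ne_zero.2 h1.1) h1.2).ne'
  · exact ENNReal.rpow_ne_top_of_ne_zero h1.1 h1.2

lemma posW (H : ApPair p A W S) (a : (EuclideanSpace ℝ (Fin n))) (r : ℝ) (hr : 0 < r) : (∫⁻ x in ball a r, W x) ≠ 0 := by
  rw [lintegral_eq_zero_iff H.mW |>.ne]
  intro h
  have h2 : ∀ᵐ x ∂(volume.restrict (ball a r)), False := by
    filter_upwards [h, ae_restrict_of_ae H.aeW] with x h1 h2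
    exact h2.1 h1
  have h3 := ae_iff.1 h2
  simp at h3
  exact (measure_ball_pos volume a hr).ne' h3

lemma posS (H : ApPair p A W S) (a : (EuclideanSpace ℝ (Fin n))) (r : ℝ) (hr : 0 < r) : (∫⁻ x in ball a r, S x) ≠ 0 := by
  rw [lintegral_eq_zero_iff H.mS |>.ne]
  intro h
  have h2 : ∀ᵐ x ∂(volume.restrict (ball a r)), False := by
    filter_upwards [h, ae_restrict_of_ae H.aeS'] with x h1 h2
    exact h2.1 h1
  have h3 := ae_iff.1 h2
  simp at h3
  exact (measure_ball_pos volume a hr).ne' h3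

lemma finS (H : ApPair p A W S) (a : (EuclideanSpace ℝ (Fin n))) (r : ℝ) (hr : 0 < r) : (∫⁻ x in ball a r, S x) ≠ ⊤ := by
  intro h
  have h1 := H.ap a r hr
  have hp := H.hp
  rw [h, ENNReal.top_rpow_of_pos (by linarith), ENNReal.mul_top (H.posW a r hr), top_le_iff] at h1
  exact ENNReal.mul_ne_top H.hA
    (ENNReal.rpow_ne_top_of_nonneg (by linarith) measure_ball_lt_top.ne) h1

lemma holder (H : ApPair p A W S) (h : (EuclideanSpace ℝ (Fin n)) → ℝ≥0∞) (hh : Measurable h) (B : Set (EuclideanSpace ℝ (Fin n))) :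
    (∫⁻ x in B, h x) ^ p ≤ (∫⁻ x in B, h x ^ p * W x) * (∫⁻ x in B, S x) ^ (p - 1) := by
  have hp := H.hp
  have hp0 : 0 < p := by linarith
  have hp1 : 0 < p - 1 := by linarith
  have hc : p.HolderConjugate (p / (p - 1)) := Real.HolderConjugate.conjExponent hp
  have mW := H.mW
  have key := ENNReal.lintegral_mul_le_Lp_mul_Lq (volume.restrict B) hc
    (f := fun x => h x * W x ^ (1/p)) (g := fun x => W x ^ (-(1/p)))
    (by fun_prop) (by fun_prop)
  have e1 : ∫⁻ x in B, ((fun x => h x * W x ^ (1/p)) * (fun x => W x ^ (-(1/p)))) x =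
      ∫⁻ x in B, h x := by
    apply lintegral_congr_ae
    filter_upwards [ae_restrict_of_ae H.aeW] with x hx
    simp only [Pi.mul_apply]
    rw [mul_assoc, ← ENNReal.rpow_add _ _ hx.1 hx.2]
    simp
  have e2 : ∫⁻ x in B, (h x * W x ^ (1/p)) ^ p = ∫⁻ x in B, h x ^ p * W x := by
    apply lintegral_congr
    intro x
    rw [ENNReal.mul_rpow_of_nonneg _ _ hp0.le, ← ENNReal.rpow_mul, one_div,
      inv_mul_cancel₀ hp0.ne', ENNReal.rpow_one]
  have e3 : ∫⁻ x in B, (W x ^ (-(1/p))) ^ (p / (p-1)) = ∫⁻ x in B, S x := by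
    apply lintegral_congr_ae
    filter_upwards [ae_restrict_of_ae H.aeS] with x hx
    rw [hx, ← ENNReal.rpow_mul]
    congr 1
    field_simp
  rw [e1, e2, e3] at key
  calc (∫⁻ x in B, h x) ^ p ≤ _ := ENNReal.rpow_le_rpow key hp0.le
    _ = _ := by
      rw [ENNReal.mul_rpow_of_nonneg _ _ hp0.le, ← ENNReal.rpow_mul, ← ENNReal.rpow_mul]
      congr 2
      · rw [one_div, inv_mul_cancel₀ hp0.ne', ENNReal.rpow_one]
      · field_simp

lemma vol_scale (a : (EuclideanSpace ℝ (Fin n))) (r : ℝ) (hr : 0 < r) (c : ℝ) (hc : 0 < c) :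
    volume (ball a (c * r)) = ENNReal.ofReal (c ^ n) * volume (ball a r) := by
  rw [Measure.addHaar_ball_of_pos volume a (mul_pos hc hr), Measure.addHaar_ball_of_pos volume a hr,
    mul_pow, ENNReal.ofReal_mul (by positivity)]
  simp [mul_assoc]

lemma vol_le (H : ApPair p A W S) (a : (EuclideanSpace ℝ (Fin n))) (r : ℝ) :
    volume (ball a r) ^ p ≤ (∫⁻ x in ball a r, W x) * (∫⁻ x in ball a r, S x) ^ (p - 1) := by
  have := H.holder (fun _ => 1) measurable_const (ball a r)
  simpa using this

/-- doubling constant for `W` -/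
noncomputable def DW (n : ℕ) (p : ℝ) (A : ℝ≥0∞) : ℝ≥0∞ := A * ENNReal.ofReal (6 ^ n) ^ p

noncomputable def DS (n : ℕ) (p : ℝ) (A : ℝ≥0∞) : ℝ≥0∞ := (DW n p A) ^ (1 / (p - 1))

lemma DW_fin (H : ApPair p A W S) : DW n p A ≠ ⊤ := by
  have hp := H.hp
  exact ENNReal.mul_ne_top H.hA (ENNReal.rpow_ne_top_of_nonneg (by linarith) ENNReal.ofReal_ne_top)

lemma DS_fin (H : ApPair p A W S) : DS n p A ≠ ⊤ := by
  have hp := H.hp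
  refine ENNReal.rpow_ne_top_of_nonneg ?_ H.DW_fin
  apply one_div_nonneg.2; linarith

lemma both (H : ApPair p A W S) (a : (EuclideanSpace ℝ (Fin n))) (r : ℝ) (hr : 0 < r) :
    (∫⁻ x in ball a (6 * r), W x) * (∫⁻ x in ball a (6 * r), S x) ^ (p - 1) ≤
      DW n p A * ((∫⁻ x in ball a r, W x) * (∫⁻ x in ball a r, S x) ^ (p - 1)) := by
  have hp := H.hp
  refine (H.ap a (6 * r) (by positivity)).trans ?_
  rw [vol_scale a r hr 6 (by norm_num), ENNReal.mul_rpow_of_nonneg _ _ (by linarith), ← mul_assoc]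
  exact mul_le_mul' le_rfl (H.vol_le a r)

lemma doubW (H : ApPair p A W S) (a : (EuclideanSpace ℝ (Fin n))) (r : ℝ) (hr : 0 < r) :
    (∫⁻ x in ball a (6 * r), W x) ≤ DW n p A * (∫⁻ x in ball a r, W x) := by
  have hp := H.hp
  have hs : ball a r ⊆ ball a (6 * r) := ball_subset_ball (by linarith)
  have h6 : 0 < 6 * r := by positivity
  have h0 : (∫⁻ x in ball a (6 * r), S x) ^ (p - 1) ≠ 0 :=
    (ENNReal.rpow_pos (pos_iff_ne_zero.2 (H.posS a _ h6)) (H.finS a _ h6)).ne'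
  have h1 : (∫⁻ x in ball a (6 * r), S x) ^ (p - 1) ≠ ⊤ :=
    ENNReal.rpow_ne_top_of_nonneg (by linarith) (H.finS a _ h6)
  rw [← ENNReal.mul_le_mul_iff_left h0 h1]
  refine (H.both a r hr).trans ?_
  rw [mul_assoc]
  gcongr

lemma doubS (H : ApPair p A W S) (a : (EuclideanSpace ℝ (Fin n))) (r : ℝ) (hr : 0 < r) :
    (∫⁻ x in ball a (6 * r), S x) ≤ DS n p A * (∫⁻ x in ball a r, S x) := by
  have hp := H.hp
  have hp1 : 0 < p - 1 := by linarith
  have hs : ball a r ⊆ ball a (6 * r) := ball_subset_ball (by linarith)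
  have h6 : 0 < 6 * r := by positivity
  rw [← ENNReal.rpow_le_rpow_iff hp1, ENNReal.mul_rpow_of_nonneg _ _ hp1.le, DS, ← ENNReal.rpow_mul,
    one_div, inv_mul_cancel₀ hp1.ne', ENNReal.rpow_one]
  rw [← ENNReal.mul_le_mul_iff_right (H.posW a _ h6) (H.fin a _)]
  refine (H.both a r hr).trans ?_
  rw [mul_left_comm]
  gcongr

lemma inv_le_mul_inv {a b D : ℝ≥0∞} (ha : a ≠ 0) (hb : b ≠ ⊤) (hb0 : b ≠ 0) (h : b ≤ D * a) (ha' : a ≠ ⊤) :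
    a⁻¹ ≤ D * b⁻¹ := by
  rw [← div_eq_mul_inv, ENNReal.le_div_iff_mul_le (Or.inl hb0) (Or.inl hb), mul_comm, ← div_eq_mul_inv]
  exact ENNReal.div_le_of_le_mul h

lemma avgS (H : ApPair p A W S) (h : (EuclideanSpace ℝ (Fin n)) → ℝ≥0∞) (hh : Measurable h) (B : Set (EuclideanSpace ℝ (Fin n))) (hB : MeasurableSet B) :
    ∫⁻ y in B, h y / S y ∂(volume.withDensity S) = ∫⁻ y in B, h y := by
  rw [setLIntegral_withDensity_eq_setLIntegral_mul _ H.mS (g := fun y => h y / S y) (hh.div H.mS) hB]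
  apply lintegral_congr_ae
  filter_upwards [ae_restrict_of_ae H.aeS'] with x hx
  exact ENNReal.mul_div_cancel hx.1 hx.2

/-- Lerner's auxiliary function. -/
noncomputable def GG (p : ℝ) (W S h : EuclideanSpace ℝ (Fin n) → ℝ≥0∞)
    (y : EuclideanSpace ℝ (Fin n)) : ℝ≥0∞ :=
  (MD (volume.withDensity S) (fun z => h z / S z) y) ^ (p - 1) * (W y)⁻¹

lemma measurable_GG (H : ApPair p A W S) (h : (EuclideanSpace ℝ (Fin n)) → ℝ≥0∞) (hh : Measurable h) :
    Measurable (GG p W S h) := by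
  have := measurable_MD (volume.withDensity S) (g := fun z => h z / S z) (hh.div H.mS)
  have := H.mW
  unfold GG
  fun_prop

lemma lerner (H : ApPair p A W S) (h : (EuclideanSpace ℝ (Fin n)) → ℝ≥0∞) (hh : Measurable h) (x : (EuclideanSpace ℝ (Fin n))) (r : ℝ) (hr : 0 < r) :
    ((volume (ball x r))⁻¹ * ∫⁻ y in ball x r, h y) ^ (p - 1) ≤
      (ENNReal.ofReal (2 ^ n) ^ (p - 1) * (DS n p A ^ (p - 1) * A)) *
        MD (volume.withDensity W) (GG p W S h) x := by
  have hp := H.hp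
  have hp1 : 0 < p - 1 := by linarith
  obtain ⟨k, hk1, hk2⟩ := exists_mem_Ioc_zpow hr (by norm_num : (1:ℝ) < 2)
  set ρ : ℝ := (2:ℝ) ^ (k+1) with hρ
  have hρ0 : 0 < ρ := by positivity
  have hρ2 : ρ ≤ 2 * r := by
    rw [hρ, zpow_add_one₀ (by norm_num)]; linarith
  set V := volume (ball x ρ) with hV
  set m := ∫⁻ y in ball x ρ, W y with hm
  set s := ∫⁻ y in ball x ρ, S y with hs
  set I := ∫⁻ y in ball x ρ, h y with hI
  set Z := MD (volume.withDensity W) (GG p W S h) x with hZ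
  have hV0 : V ≠ 0 := (measure_ball_pos volume x hρ0).ne'
  have hV1 : V ≠ ⊤ := measure_ball_lt_top.ne
  have hm0 : m ≠ 0 := H.posW x ρ hρ0
  have hm1 : m ≠ ⊤ := H.fin x ρ
  have hs0 : s ≠ 0 := H.posS x ρ hρ0
  have hs1 : s ≠ ⊤ := H.finS x ρ hρ0
  have h1 : ∀ y ∈ ball x ρ, s⁻¹ * I ≤ DS n p A * MD (volume.withDensity S) (fun z => h z / S z) y := by
    intro y hy
    have hy' : dist y x < ρ := hy
    have i1 : ball x ρ ⊆ ball y (2 * ρ) := ball_subset_ball' (by rw [dist_comm]; linarith)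
    have i2 : ball y (2 * ρ) ⊆ ball x (6 * ρ) := ball_subset_ball' (by linarith)
    have e : (2:ℝ) ^ (k + 1 + 1) = 2 * ρ := by rw [zpow_add_one₀ (by norm_num), hρ]; ring
    have t : (volume.withDensity S (ball y (2 * ρ)))⁻¹ *
        ∫⁻ z in ball y (2 * ρ), h z / S z ∂(volume.withDensity S) ≤
        MD (volume.withDensity S) (fun z => h z / S z) y := by
      rw [← e]
      exact le_iSup (fun k : ℤ => (volume.withDensity S (ball y ((2:ℝ)^k)))⁻¹ *
        ∫⁻ z in ball y ((2:ℝ)^k), h z / S z ∂(volume.withDensity S)) (k+1+1)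
    rw [withDensity_apply _ measurableSet_ball, H.avgS h hh _ measurableSet_ball] at t
    have q1 : s⁻¹ ≤ DS n p A * (∫⁻ z in ball y (2 * ρ), S z)⁻¹ := by
      refine inv_le_mul_inv hs0 (H.finS _ _ (by positivity)) (H.posS _ _ (by positivity)) ?_ hs1
      exact (lintegral_mono_set i2).trans (H.doubS x ρ hρ0)
    calc s⁻¹ * I ≤ (DS n p A * (∫⁻ z in ball y (2 * ρ), S z)⁻¹) * ∫⁻ z in ball y (2 * ρ), h z :=
          mul_le_mul' q1 (lintegral_mono_set i1)
      _ ≤ _ := by rw [mul_assoc]; exact mul_le_mul' le_rfl t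
  have h2 : (s⁻¹ * I) ^ (p-1) * V ≤ DS n p A ^ (p-1) * (m * Z) := by
    calc (s⁻¹ * I) ^ (p-1) * V = ∫⁻ y in ball x ρ, (s⁻¹ * I) ^ (p-1) := by
          rw [setLIntegral_const]
      _ ≤ ∫⁻ y in ball x ρ, DS n p A ^ (p-1) * (W y * GG p W S h y) := by
          apply lintegral_mono_ae
          filter_upwards [ae_restrict_of_ae H.aeW, ae_restrict_mem measurableSet_ball] with y hy hyb
          have e : W y * GG p W S h y =
              (MD (volume.withDensity S) (fun z => h z / S z) y) ^ (p - 1) := by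
            unfold GG
            rw [mul_left_comm, ENNReal.mul_inv_cancel hy.1 hy.2, mul_one]
          rw [e, ← ENNReal.mul_rpow_of_nonneg _ _ hp1.le]
          exact ENNReal.rpow_le_rpow (h1 y hyb) hp1.le
      _ = DS n p A ^ (p-1) * ∫⁻ y in ball x ρ, GG p W S h y ∂(volume.withDensity W) := by
          rw [setLIntegral_withDensity_eq_setLIntegral_mul _ H.mW (H.measurable_GG h hh) measurableSet_ball,
            lintegral_const_mul]
          · rfl
          · exact H.mW.mul (H.measurable_GG h hh)
      _ ≤ _ := by
          gcongr
          have t : (volume.withDensity W (ball x ρ))⁻¹ *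
              ∫⁻ z in ball x ρ, GG p W S h z ∂(volume.withDensity W) ≤ Z :=
            le_iSup (fun k : ℤ => (volume.withDensity W (ball x ((2:ℝ)^k)))⁻¹ *
              ∫⁻ z in ball x ((2:ℝ)^k), GG p W S h z ∂(volume.withDensity W)) (k+1)
          rw [withDensity_apply _ measurableSet_ball] at t
          rwa [mul_comm, ← div_eq_mul_inv, ENNReal.div_le_iff hm0 hm1, mul_comm] at t
  have h3 : I ^ (p-1) ≤ (DS n p A ^ (p-1) * A * Z) * V ^ (p-1) := by
    rw [← ENNReal.mul_le_mul_iff_left hV0 hV1]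
    have e : I ^ (p-1) = s ^ (p-1) * (s⁻¹ * I) ^ (p-1) := by
      rw [← ENNReal.mul_rpow_of_nonneg _ _ hp1.le, ← mul_assoc, ENNReal.mul_inv_cancel hs0 hs1, one_mul]
    have eV : V ^ p = V ^ (p-1) * V := by
      conv_lhs => rw [show p = (p-1) + 1 by ring]
      rw [ENNReal.rpow_add _ _ hV0 hV1, ENNReal.rpow_one]
    calc I ^ (p-1) * V = s ^ (p-1) * ((s⁻¹ * I) ^ (p-1) * V) := by rw [e, mul_assoc]
      _ ≤ s ^ (p-1) * (DS n p A ^ (p-1) * (m * Z)) := mul_le_mul' le_rfl h2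
      _ = DS n p A ^ (p-1) * Z * (m * s ^ (p-1)) := by ring
      _ ≤ DS n p A ^ (p-1) * Z * (A * V ^ p) := mul_le_mul' le_rfl (H.ap x ρ hρ0)
      _ = _ := by rw [eV]; ring
  have h4 : (V⁻¹ * I) ^ (p-1) ≤ DS n p A ^ (p-1) * A * Z := by
    rw [ENNReal.mul_rpow_of_nonneg _ _ hp1.le]
    refine (mul_le_mul' le_rfl h3).trans ?_
    rw [mul_left_comm, ← ENNReal.mul_rpow_of_nonneg _ _ hp1.le, ENNReal.inv_mul_cancel hV0 hV1]
    simp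
  have h5 : (volume (ball x r))⁻¹ * ∫⁻ y in ball x r, h y ≤ ENNReal.ofReal (2 ^ n) * (V⁻¹ * I) := by
    rw [← mul_assoc]
    refine mul_le_mul' ?_ (lintegral_mono_set (ball_subset_ball hk2))
    refine inv_le_mul_inv (measure_ball_pos volume x hr).ne' hV1 hV0 ?_ measure_ball_lt_top.ne
    rw [← vol_scale x r hr 2 (by norm_num)]
    exact measure_mono (ball_subset_ball hρ2)
  calc _ ≤ (ENNReal.ofReal (2 ^ n) * (V⁻¹ * I)) ^ (p-1) := ENNReal.rpow_le_rpow h5 hp1.le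
    _ ≤ _ := by
      rw [ENNReal.mul_rpow_of_nonneg _ _ hp1.le, mul_assoc]
      exact mul_le_mul' le_rfl h4

lemma muckenhoupt (H : ApPair p A W S) : ∃ K : ℝ≥0∞, K ≠ ⊤ ∧ ∀ h : (EuclideanSpace ℝ (Fin n)) → ℝ≥0∞, Measurable h →
    ∫⁻ x, (⨆ r : Set.Ioi (0 : ℝ), (volume (ball x r.1))⁻¹ * ∫⁻ y in ball x r.1, h y) ^ p * W x ≤
      K * ∫⁻ x, h x ^ p * W x := by
  have hp := H.hp
  have hp0 : 0 < p := by linarith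
  have hp1 : 0 < p - 1 := by linarith
  set K0 := (ENNReal.ofReal (2 ^ n) ^ (p - 1) * (DS n p A ^ (p - 1) * A)) with hK0
  have hK0f : K0 ≠ ⊤ := ENNReal.mul_ne_top (ENNReal.rpow_ne_top_of_nonneg hp1.le ENNReal.ofReal_ne_top)
    (ENNReal.mul_ne_top (ENNReal.rpow_ne_top_of_nonneg hp1.le H.DS_fin) H.hA)
  set q := p / (p - 1) with hq
  have hq1 : 1 < q := by rw [hq, lt_div_iff₀ hp1]; linarith
  have hq0 : 0 < q := by linarith
  set K1 := (2 ^ q * ENNReal.ofReal q * DW n p A / ENNReal.ofReal (q - 1)) with hK1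
  set K2 := (2 ^ p * ENNReal.ofReal p * DS n p A / ENNReal.ofReal (p - 1)) with hK2
  have hK1f : K1 ≠ ⊤ := ENNReal.div_ne_top (ENNReal.mul_ne_top (ENNReal.mul_ne_top
    (ENNReal.rpow_ne_top_of_nonneg hq0.le (by simp)) ENNReal.ofReal_ne_top) H.DW_fin)
    (by simpa using hq1)
  have hK2f : K2 ≠ ⊤ := ENNReal.div_ne_top (ENNReal.mul_ne_top (ENNReal.mul_ne_top
    (ENNReal.rpow_ne_top_of_nonneg hp0.le (by simp)) ENNReal.ofReal_ne_top) H.DS_fin)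
    (by simpa using hp)
  refine ⟨K0 ^ q * (K1 * K2), ENNReal.mul_ne_top (ENNReal.rpow_ne_top_of_nonneg hq0.le hK0f)
    (ENNReal.mul_ne_top hK1f hK2f), fun h hh => ?_⟩
  have hpq : (p - 1) * q = p := by rw [hq]; field_simp
  have mG := H.measurable_GG h hh
  have mM := measurable_MD (volume.withDensity W) mG
  have mS := measurable_MD (volume.withDensity S) (g := fun z => h z / S z) (hh.div H.mS)
  have mW := H.mW
  have mSS := H.mS
  calc ∫⁻ x, (⨆ r : Set.Ioi (0 : ℝ), (volume (ball x r.1))⁻¹ * ∫⁻ y in ball x r.1, h y) ^ p * W x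
      ≤ ∫⁻ x, K0 ^ q * (W x * (MD (volume.withDensity W) (GG p W S h) x) ^ q) := by
        apply lintegral_mono
        intro x
        simp only
        rw [mul_left_comm, mul_comm]
        refine mul_le_mul' le_rfl ?_
        have epq : ∀ t : ℝ≥0∞, t ^ p = (t ^ (p - 1)) ^ q := fun t => by
          rw [← ENNReal.rpow_mul, hpq]
        rw [← ENNReal.mul_rpow_of_nonneg _ _ hq0.le, epq]
        refine ENNReal.rpow_le_rpow ?_ hq0.le
        rw [← ENNReal.le_rpow_inv_iff hp1]
        refine iSup_le fun r => ?_
        rw [ENNReal.le_rpow_inv_iff hp1]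
        exact H.lerner h hh x r.1 r.2
    _ = K0 ^ q * ∫⁻ x, (MD (volume.withDensity W) (GG p W S h) x) ^ q ∂(volume.withDensity W) := by
        rw [lintegral_const_mul _ (by fun_prop),
          lintegral_withDensity_eq_lintegral_mul _ H.mW (by fun_prop)]
        rfl
    _ ≤ K0 ^ q * (K1 * ∫⁻ x, (GG p W S h x) ^ q ∂(volume.withDensity W)) := by
        refine mul_le_mul' le_rfl (MD_strong _ _ ?_ q hq1 _ mG)
        intro x r hr
        rw [withDensity_apply _ measurableSet_ball, withDensity_apply _ measurableSet_ball]
        exact H.doubW x r hr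
    _ = K0 ^ q * (K1 * ∫⁻ x, (MD (volume.withDensity S) (fun z => h z / S z) x) ^ p
          ∂(volume.withDensity S)) := by
        congr 2
        rw [lintegral_withDensity_eq_lintegral_mul _ H.mW (by fun_prop),
          lintegral_withDensity_eq_lintegral_mul _ H.mS (by fun_prop)]
        apply lintegral_congr_ae
        filter_upwards [H.aeW, H.aeS] with x h1 h2
        simp only [Pi.mul_apply, GG]
        rw [ENNReal.mul_rpow_of_nonneg _ _ hq0.le, ← ENNReal.rpow_mul, hpq, mul_left_comm, mul_comm]
        congr 1
        rw [h2, ← ENNReal.rpow_neg_one, ← ENNReal.rpow_mul]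
        nth_rewrite 1 [← ENNReal.rpow_one (W x)]
        rw [← ENNReal.rpow_add _ _ h1.1 h1.2]
        congr 1
        rw [hq]; field_simp; ring
    _ ≤ K0 ^ q * (K1 * (K2 * ∫⁻ x, (h x / S x) ^ p ∂(volume.withDensity S))) := by
        refine mul_le_mul' le_rfl (mul_le_mul' le_rfl (MD_strong _ _ ?_ p hp _ (hh.div H.mS)))
        intro x r hr
        rw [withDensity_apply _ measurableSet_ball, withDensity_apply _ measurableSet_ball]
        exact H.doubS x r hr
    _ = _ := by
        rw [lintegral_withDensity_eq_lintegral_mul _ H.mS (by fun_prop), mul_assoc, mul_assoc]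
        congr 3
        apply lintegral_congr_ae
        filter_upwards [H.aeW, H.aeS, H.aeS'] with x h1 h2 h3
        simp only [Pi.mul_apply]
        rw [div_eq_mul_inv, ENNReal.mul_rpow_of_nonneg _ _ hp0.le, mul_left_comm]
        congr 1
        rw [← ENNReal.rpow_neg_one, ← ENNReal.rpow_mul]
        nth_rewrite 1 [← ENNReal.rpow_one (S x)]
        rw [← ENNReal.rpow_add _ _ h3.1 h3.2, h2, ← ENNReal.rpow_mul]
        have : (-(1 / (p - 1))) * (1 + -1 * p) = 1 := by field_simp; ring
        rw [this, ENNReal.rpow_one]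

lemma avg_le (H : ApPair p A W S) (h : (EuclideanSpace ℝ (Fin n)) → ℝ≥0∞) (hh : Measurable h) (a : (EuclideanSpace ℝ (Fin n))) (t : ℝ) (ht : 0 < t) :
    (volume (ball a t))⁻¹ * ∫⁻ x in ball a t, h x ≤
      A ^ (1 / p) * ((∫⁻ x in ball a t, W x) ^ (-(1 / p)) *
        (∫⁻ x in ball a t, h x ^ p * W x) ^ (1 / p)) := by
  have hp := H.hp
  have hp0 : 0 < p := by linarith
  have hol := H.holder h hh (ball a t)
  have ap := H.ap a t ht
  set V := volume (ball a t)
  set m := ∫⁻ y in ball a t, W y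
  set s := ∫⁻ y in ball a t, S y
  set J := ∫⁻ x in ball a t, h x ^ p * W x
  have hV0 : V ≠ 0 := (measure_ball_pos volume a ht).ne'
  have hV1 : V ≠ ⊤ := measure_ball_lt_top.ne
  have hm0 : m ≠ 0 := H.posW a t ht
  have hm1 : m ≠ ⊤ := H.fin a t
  have e : ∀ u : ℝ≥0∞, (u ^ (1/p)) ^ p = u := fun u => by
    rw [← ENNReal.rpow_mul, one_div, inv_mul_cancel₀ hp0.ne', ENNReal.rpow_one]
  rw [← ENNReal.rpow_le_rpow_iff hp0, ENNReal.mul_rpow_of_nonneg _ _ hp0.le,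
    ENNReal.mul_rpow_of_nonneg _ _ hp0.le, ENNReal.mul_rpow_of_nonneg _ _ hp0.le,
    ENNReal.rpow_neg, ENNReal.inv_rpow, ENNReal.inv_rpow, e, e, e]
  have hVp0 : V ^ p ≠ 0 := (ENNReal.rpow_pos (pos_iff_ne_zero.2 hV0) hV1).ne'
  have hVp1 : V ^ p ≠ ⊤ := ENNReal.rpow_ne_top_of_nonneg hp0.le hV1
  have k : (V ^ p)⁻¹ * s ^ (p-1) ≤ A * m⁻¹ := by
    rw [mul_comm, ← div_eq_mul_inv, ← div_eq_mul_inv, ENNReal.div_le_iff hVp0 hVp1,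
      mul_comm, ← mul_div_assoc, ENNReal.le_div_iff_mul_le (Or.inl hm0) (Or.inl hm1), mul_comm,
      mul_comm (V ^ p)]
    exact ap
  calc (V ^ p)⁻¹ * (∫⁻ x in ball a t, h x) ^ p ≤ (V ^ p)⁻¹ * (J * s ^ (p-1)) := mul_le_mul' le_rfl hol
    _ = ((V ^ p)⁻¹ * s ^ (p-1)) * J := by ring
    _ ≤ (A * m⁻¹) * J := mul_le_mul' k le_rfl
    _ = _ := by ring

lemma G_double (H : ApPair p A W S) (h : (EuclideanSpace ℝ (Fin n)) → ℝ≥0∞) (a : (EuclideanSpace ℝ (Fin n))) (t s : ℝ) (ht : 0 < t)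
    (hts : t ≤ s) (hs : s ≤ 2 * t) :
    (∫⁻ x in ball a t, W x) ^ (-(1 / p)) * (∫⁻ x in ball a t, h x ^ p * W x) ^ (1 / p) ≤
      DW n p A ^ (1 / p) * ((∫⁻ x in ball a s, W x) ^ (-(1 / p)) *
        (∫⁻ x in ball a s, h x ^ p * W x) ^ (1 / p)) := by
  have hp := H.hp
  have hp0 : 0 < 1 / p := by apply one_div_pos.2; linarith
  have hs0 : 0 < s := by linarith
  rw [← mul_assoc]
  refine mul_le_mul' ?_ (ENNReal.rpow_le_rpow (lintegral_mono_set (ball_subset_ball hts)) hp0.le)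
  rw [ENNReal.rpow_neg, ENNReal.rpow_neg]
  have z : ∀ u, 0 < u → (∫⁻ x in ball a u, W x) ^ (1/p) ≠ 0 := fun u hu =>
    (ENNReal.rpow_pos (pos_iff_ne_zero.2 (H.posW a u hu)) (H.fin a u)).ne'
  have z' : ∀ u, (∫⁻ x in ball a u, W x) ^ (1/p) ≠ ⊤ := fun u =>
    ENNReal.rpow_ne_top_of_nonneg hp0.le (H.fin a u)
  refine inv_le_mul_inv (z t ht) (z' s) (z s hs0) ?_ (z' t)
  rw [← ENNReal.mul_rpow_of_nonneg _ _ hp0.le]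
  refine ENNReal.rpow_le_rpow ?_ hp0.le
  exact (lintegral_mono_set (ball_subset_ball (by linarith))).trans (H.doubW a t ht)

lemma G_bound (H : ApPair p A W S) (h : (EuclideanSpace ℝ (Fin n)) → ℝ≥0∞) (a : (EuclideanSpace ℝ (Fin n))) (r : ℝ) (hr : 0 < r)
    (ψ : ℝ → ℝ) (N P : ℝ≥0∞) (hN : N ≠ ⊤)
    (hG : ∀ t, 0 < t → (∫⁻ x in ball a t, W x) ^ (-(1 / p)) *
      (∫⁻ x in ball a t, h x ^ p * W x) ^ (1 / p) ≤ ENNReal.ofReal (ψ t) * N)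
    (hP : (∫⁻ t in Set.Ioi r, ENNReal.ofReal (ψ t) * ENNReal.ofReal t⁻¹) ≤ P) (t : ℝ) (hrt : r ≤ t) :
    (∫⁻ x in ball a t, W x) ^ (-(1 / p)) * (∫⁻ x in ball a t, h x ^ p * W x) ^ (1 / p) ≤
      (2 * DW n p A ^ (1 / p)) * (N * P) := by
  have hp := H.hp
  have hp0 : 0 < 1 / p := by apply one_div_pos.2; linarith
  have ht : 0 < t := by linarith
  set Gt := (∫⁻ x in ball a t, W x) ^ (-(1 / p)) * (∫⁻ x in ball a t, h x ^ p * W x) ^ (1 / p) with hGt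
  have hD : DW n p A ^ (1 / p) ≠ ⊤ := ENNReal.rpow_ne_top_of_nonneg hp0.le H.DW_fin
  have k1 : Gt * 2⁻¹ ≤ DW n p A ^ (1/p) * N * P := by
    calc Gt * 2⁻¹ = ∫⁻ s in Ioc t (2*t), Gt * ENNReal.ofReal (2*t)⁻¹ := by
          rw [setLIntegral_const, Real.volume_Ioc, mul_assoc Gt, ← ENNReal.ofReal_mul (by positivity)]
          congr 1
          have : (2 * t)⁻¹ * (2 * t - t) = 2⁻¹ := by field_simp; ring
          rw [this, ENNReal.ofReal_inv_of_pos (by norm_num)]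
          simp
      _ ≤ ∫⁻ s in Ioc t (2*t), DW n p A ^ (1/p) * N * (ENNReal.ofReal (ψ s) * ENNReal.ofReal s⁻¹) := by
          apply setLIntegral_mono' measurableSet_Ioc
          intro s hs
          have hs0 : 0 < s := ht.trans hs.1
          calc Gt * ENNReal.ofReal (2*t)⁻¹
              ≤ (DW n p A ^ (1/p) * (ENNReal.ofReal (ψ s) * N)) * ENNReal.ofReal s⁻¹ := by
                refine mul_le_mul' ?_ (ENNReal.ofReal_le_ofReal ?_)
                · exact (H.G_double h a t s ht hs.1.le hs.2).trans (mul_le_mul' le_rfl (hG s hs0))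
                · exact inv_anti₀ hs0 hs.2
            _ = _ := by ring
      _ = DW n p A ^ (1/p) * N * ∫⁻ s in Ioc t (2*t), (ENNReal.ofReal (ψ s) * ENNReal.ofReal s⁻¹) := by
          rw [lintegral_const_mul' _ _ (ENNReal.mul_ne_top hD hN)]
      _ ≤ _ := by
          refine mul_le_mul' le_rfl ((lintegral_mono_set ?_).trans hP)
          intro s hs
          exact hrt.trans_lt hs.1
  rw [← div_eq_mul_inv, ENNReal.div_le_iff (by simp) (by simp)] at k1
  refine k1.trans (le_of_eq ?_)
  ring

lemma local_bound (H : ApPair p A W S) (h : (EuclideanSpace ℝ (Fin n)) → ℝ≥0∞) (hh : Measurable h) (a : (EuclideanSpace ℝ (Fin n))) (r : ℝ) (hr : 0 < r)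
    (c : ℝ≥0∞)
    (hc : ∀ t, r ≤ t → (∫⁻ x in ball a t, W x) ^ (-(1 / p)) *
      (∫⁻ x in ball a t, h x ^ p * W x) ^ (1 / p) ≤ c) (x : (EuclideanSpace ℝ (Fin n))) (hx : x ∈ ball a r) :
    (⨆ ρ : Set.Ioi (0 : ℝ), (volume (ball x ρ.1))⁻¹ * ∫⁻ y in ball x ρ.1, h y) ≤
    (⨆ ρ : Set.Ioi (0 : ℝ), (volume (ball x ρ.1))⁻¹ *
      ∫⁻ y in ball x ρ.1, (ball a (2 * r)).indicator h y) +
      ENNReal.ofReal (2 ^ n) * A ^ (1 / p) * c := by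
  have hx' : dist x a < r := hx
  refine iSup_le fun ρ => ?_
  have hρ : 0 < ρ.1 := ρ.2
  by_cases hle : ρ.1 ≤ r
  · refine le_add_right ?_
    refine le_trans (le_of_eq ?_) (le_iSup _ ρ)
    congr 1
    apply setLIntegral_congr_fun measurableSet_ball
    intro y hy
    have : y ∈ ball a (2 * r) := ball_subset_ball' (by linarith) hy
    simp [Set.indicator_of_mem this]
  · push Not at hle
    calc (volume (ball x ρ.1))⁻¹ * ∫⁻ y in ball x ρ.1, h y
        ≤ (volume (ball x ρ.1))⁻¹ * ((∫⁻ y in ball x ρ.1, (ball a (2 * r)).indicator h y) +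
            ∫⁻ y in ball x ρ.1, h y) := by
          refine mul_le_mul' le_rfl (le_add_left le_rfl)
      _ = (volume (ball x ρ.1))⁻¹ * (∫⁻ y in ball x ρ.1, (ball a (2 * r)).indicator h y) +
            (volume (ball x ρ.1))⁻¹ * ∫⁻ y in ball x ρ.1, h y := mul_add _ _ _
      _ ≤ _ := by
          refine add_le_add (le_iSup (fun ρ : Set.Ioi (0:ℝ) => (volume (ball x ρ.1))⁻¹ *
            (∫⁻ y in ball x ρ.1, (ball a (2 * r)).indicator h y)) ρ) ?_
          have i1 : ball x ρ.1 ⊆ ball a (2 * ρ.1) := ball_subset_ball' (by linarith)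
          have hv : (volume (ball x ρ.1))⁻¹ ≤
              ENNReal.ofReal (2 ^ n) * (volume (ball a (2 * ρ.1)))⁻¹ := by
            refine inv_le_mul_inv (measure_ball_pos volume x hρ).ne' measure_ball_lt_top.ne
              (measure_ball_pos volume a (by positivity)).ne' (le_of_eq ?_) measure_ball_lt_top.ne
            rw [vol_scale a ρ.1 hρ 2 (by norm_num), Measure.addHaar_ball_of_pos volume a hρ,
              Measure.addHaar_ball_of_pos volume x hρ]
          calc _ ≤ (ENNReal.ofReal (2 ^ n) * (volume (ball a (2 * ρ.1)))⁻¹) *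
                ∫⁻ y in ball a (2 * ρ.1), h y := mul_le_mul' hv (lintegral_mono_set i1)
            _ ≤ ENNReal.ofReal (2 ^ n) * (A ^ (1/p) * c) := by
                rw [mul_assoc]
                refine mul_le_mul' le_rfl ((H.avg_le h hh a (2 * ρ.1) (by positivity)).trans ?_)
                exact mul_le_mul' le_rfl (hc _ (by linarith))
            _ = _ := by ring

end ApPair

lemma ApPair.of_muck {p : ℝ} (hp : 1 < p) {w : (EuclideanSpace ℝ (Fin n)) → ℝ} (hw : IsWeight w) (hAp : MuckAp p w) :
    ∃ A, ApPair p A (fun x => ENNReal.ofReal (w x))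
      (fun x => ENNReal.ofReal (w x ^ (-(1 / (p - 1))))) := by
  obtain ⟨C, hC, h⟩ := hAp
  obtain ⟨mw, w0, wl, wp⟩ := hw
  refine ⟨ENNReal.ofReal C, hp, ENNReal.ofReal_ne_top, by fun_prop, by fun_prop, ?_, ?_, ?_, ?_⟩
  · filter_upwards [wp] with x hx
    exact ⟨by simpa using hx, ENNReal.ofReal_ne_top⟩
  · filter_upwards [wp] with x hx
    rw [ENNReal.ofReal_rpow_of_pos hx]
  · intro a r
    have h1 : IntegrableOn w (ball a r) :=
      (wl.integrableOn_isCompact (isCompact_closedBall a r)).mono_set ball_subset_closedBall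
    exact h1.lintegral_lt_top.ne
  · intro a r hr
    have h1 := h a r hr
    set V := volume (ball a r)
    set m := ∫⁻ x in ball a r, ENNReal.ofReal (w x)
    set s := ∫⁻ x in ball a r, ENNReal.ofReal (w x ^ (-(1 / (p - 1))))
    have hV0 : V ≠ 0 := (measure_ball_pos volume a hr).ne'
    have hV1 : V ≠ ⊤ := measure_ball_lt_top.ne
    have eV : V ^ p = V ^ (p-1) * V := by
      conv_lhs => rw [show p = (p-1) + 1 by ring]
      rw [ENNReal.rpow_add _ _ hV0 hV1, ENNReal.rpow_one]
    have e : m * s ^ (p-1) = (V⁻¹ * m) * (V⁻¹ * s) ^ (p-1) * V ^ p := by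
      calc m * s ^ (p-1) = ((V * V⁻¹) * m) * ((V * V⁻¹) * s) ^ (p-1) := by
            rw [ENNReal.mul_inv_cancel hV0 hV1, one_mul, one_mul]
        _ = _ := by
            rw [eV, mul_assoc V V⁻¹ m, mul_assoc V V⁻¹ s, ENNReal.mul_rpow_of_nonneg V _ (by linarith)]; ring
    rw [e]
    exact mul_le_mul' h1 le_rfl

end Abstract

/-- Let `1 < p < ∞`, `w ∈ A_p`, and let `ψ₁, ψ₂` be positive functions on
`ℝⁿ × (0,∞)` with `∫_r^∞ ψ₁(a,t) dt/t ≤ C·ψ₂(a,r)` for all `(a,r)`. Then the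
Hardy–Littlewood maximal operator is bounded from `M^{p,w}_{ψ₁}` to `M^{p,w}_{ψ₂}`. -/
theorem statement10 {n : ℕ} (p : ℝ) (hp : 1 < p)
    (w : EuclideanSpace ℝ (Fin n) → ℝ) (hw : IsWeight w) (hAp : MuckAp p w)
    (ψ₁ ψ₂ : EuclideanSpace ℝ (Fin n) → ℝ → ℝ)
    (hψ₁ : ∀ a r, 0 < r → 0 < ψ₁ a r) (hψ₂ : ∀ a r, 0 < r → 0 < ψ₂ a r)
    (C : ℝ) (hC : 0 < C)
    (hcond : ∀ (a : EuclideanSpace ℝ (Fin n)) (r : ℝ), 0 < r →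
      (∫⁻ t in Set.Ioi r, ENNReal.ofReal (ψ₁ a t) * ENNReal.ofReal t⁻¹) ≤
        ENNReal.ofReal (C * ψ₂ a r)) :
    ∃ C' : ℝ, 0 < C' ∧ ∀ f : EuclideanSpace ℝ (Fin n) → ℝ,
      MemLocWLp p w f → morreyNorm p w ψ₁ f < ⊤ →
      morreyNormE p w ψ₂ (HLMax f) ≤ ENNReal.ofReal C' * morreyNorm p w ψ₁ f := by
  obtain ⟨A, H⟩ := ApPair.of_muck hp hw hAp
  obtain ⟨K, hK, hM⟩ := H.muckenhoupt
  have hp0 : 0 < p := by linarith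
  have hp0' : 0 < 1 / p := one_div_pos.2 hp0
  set K4 : ℝ≥0∞ := 2 * ApPair.DW n p A ^ (1 / p) with hK4
  have hK4f : K4 ≠ ⊤ := ENNReal.mul_ne_top (by simp)
    (ENNReal.rpow_ne_top_of_nonneg hp0'.le H.DW_fin)
  set K5 : ℝ≥0∞ := ENNReal.ofReal (2 ^ n) * A ^ (1 / p) * K4 with hK5
  have hK5f : K5 ≠ ⊤ := ENNReal.mul_ne_top (ENNReal.mul_ne_top ENNReal.ofReal_ne_top
    (ENNReal.rpow_ne_top_of_nonneg hp0'.le H.hA)) hK4f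
  set K6 : ℝ≥0∞ := 2 ^ (p - 1) * (K * (ApPair.DW n p A * K4 ^ p) + K5 ^ p) with hK6
  have hK6f : K6 ≠ ⊤ := by
    refine ENNReal.mul_ne_top (ENNReal.rpow_ne_top_of_nonneg (by linarith) (by simp))
      (ENNReal.add_ne_top.2 ⟨ENNReal.mul_ne_top hK (ENNReal.mul_ne_top H.DW_fin ?_), ?_⟩)
    · exact ENNReal.rpow_ne_top_of_nonneg hp0.le hK4f
    · exact ENNReal.rpow_ne_top_of_nonneg hp0.le hK5f
  have hK7 : K6 ^ (1 / p) * ENNReal.ofReal C ≠ ⊤ :=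
    ENNReal.mul_ne_top (ENNReal.rpow_ne_top_of_nonneg hp0'.le hK6f) ENNReal.ofReal_ne_top
  refine ⟨(K6 ^ (1 / p) * ENNReal.ofReal C).toReal + 1, by positivity, ?_⟩
  rintro f ⟨mf, -⟩ hN
  set N := morreyNorm p w ψ₁ f with hNdef
  have hC' : K6 ^ (1 / p) * ENNReal.ofReal C ≤
      ENNReal.ofReal ((K6 ^ (1 / p) * ENNReal.ofReal C).toReal + 1) := by
    conv_lhs => rw [← ENNReal.ofReal_toReal hK7]
    exact ENNReal.ofReal_le_ofReal (by linarith)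
  refine le_trans ?_ (mul_le_mul' hC' le_rfl)
  refine iSup_le fun a => iSup_le fun r => ?_
  obtain ⟨r, hr⟩ := r
  have hr : 0 < r := hr
  simp only [wLpE, wSet]
  have mW := H.mW
  have mF : Measurable (fun x => ENNReal.ofReal |f x|) := by fun_prop
  have e : ∀ u : ℝ≥0∞, (u ^ (1/p)) ^ p = u := fun u => by
    rw [← ENNReal.rpow_mul, one_div, inv_mul_cancel₀ hp0.ne', ENNReal.rpow_one]
  have e' : ∀ u : ℝ≥0∞, (u ^ p) ^ (1/p) = u := fun u => by
    rw [← ENNReal.rpow_mul, one_div, mul_inv_cancel₀ hp0.ne', ENNReal.rpow_one]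
  have hG : ∀ t, 0 < t → (∫⁻ x in ball a t, ENNReal.ofReal (w x)) ^ (-(1 / p)) *
      (∫⁻ x in ball a t, ENNReal.ofReal |f x| ^ p * ENNReal.ofReal (w x)) ^ (1 / p) ≤
      ENNReal.ofReal (ψ₁ a t) * N := by
    intro t ht
    have h1 : (ENNReal.ofReal (ψ₁ a t))⁻¹ * wSet w (ball a t) ^ (-(1 / p)) * wLp p w f (ball a t) ≤ N :=
      le_iSup₂_of_le (f := fun (a : EuclideanSpace ℝ (Fin n)) (r : Set.Ioi (0 : ℝ)) =>
        (ENNReal.ofReal (ψ₁ a r.1))⁻¹ * wSet w (ball a r.1) ^ (-(1 / p)) * wLp p w f (ball a r.1))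
        a ⟨t, ht⟩ le_rfl
    have hpos : ENNReal.ofReal (ψ₁ a t) ≠ 0 := by simpa using hψ₁ a t ht
    rw [mul_assoc, mul_comm, ← div_eq_mul_inv, ENNReal.div_le_iff hpos ENNReal.ofReal_ne_top] at h1
    rw [mul_comm _ N]
    exact h1
  set P := ENNReal.ofReal (C * ψ₂ a r) with hP
  have hGb := H.G_bound (fun x => ENNReal.ofReal |f x|) a r hr (ψ₁ a) N P hN.ne hG (hcond a r hr)
  have hloc := H.local_bound (fun x => ENNReal.ofReal |f x|) mF a r hr _ hGb
  set m := ∫⁻ x in ball a r, ENNReal.ofReal (w x) with hm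
  have hm0 : m ≠ 0 := H.posW a r hr
  have hm1 : m ≠ ⊤ := H.fin a r
  have hI2 : (∫⁻ x in ball a (2 * r), ENNReal.ofReal |f x| ^ p * ENNReal.ofReal (w x)) ≤
      ApPair.DW n p A * K4 ^ p * (N * P) ^ p * m := by
    have h1 := hGb (2 * r) (by linarith)
    have hz : (∫⁻ x in ball a (2 * r), ENNReal.ofReal (w x)) ≠ 0 := H.posW a _ (by positivity)
    have hz' : (∫⁻ x in ball a (2 * r), ENNReal.ofReal (w x)) ≠ ⊤ := H.fin a _
    have hd : (∫⁻ x in ball a (2 * r), ENNReal.ofReal (w x)) ≤ ApPair.DW n p A * m :=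
      (lintegral_mono_set (ball_subset_ball (by linarith))).trans (H.doubW a r hr)
    have h2 := ENNReal.rpow_le_rpow h1 hp0.le
    rw [ENNReal.mul_rpow_of_nonneg _ _ hp0.le, ENNReal.rpow_neg, ENNReal.inv_rpow, e, e,
      mul_comm, ← div_eq_mul_inv, ENNReal.div_le_iff hz hz', ENNReal.mul_rpow_of_nonneg _ _ hp0.le] at h2
    refine h2.trans ((mul_le_mul' le_rfl hd).trans (le_of_eq ?_))
    ring
  have main : ∫⁻ x in ball a r, HLMax f x ^ p * ENNReal.ofReal (w x) ≤ K6 * (N * P) ^ p * m := by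
    set g := (ball a (2 * r)).indicator (fun x => ENNReal.ofReal |f x|) with hg
    have mg : Measurable g := mF.indicator measurableSet_ball
    have hMg := hM g mg
    have hgI : ∫⁻ x, g x ^ p * ENNReal.ofReal (w x) =
        ∫⁻ x in ball a (2 * r), ENNReal.ofReal |f x| ^ p * ENNReal.ofReal (w x) := by
      rw [← lintegral_indicator measurableSet_ball]
      apply lintegral_congr
      intro x
      simp only [hg, Set.indicator]
      split_ifs
      · rfl
      · simp [hp0]
    calc ∫⁻ x in ball a r, HLMax f x ^ p * ENNReal.ofReal (w x)
        ≤ ∫⁻ x in ball a r, 2 ^ (p-1) * ((⨆ ρ : Set.Ioi (0 : ℝ), (volume (ball x ρ.1))⁻¹ *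
            ∫⁻ y in ball x ρ.1, g y) ^ p * ENNReal.ofReal (w x) +
            (K5 * (N * P)) ^ p * ENNReal.ofReal (w x)) := by
          apply setLIntegral_mono' measurableSet_ball
          intro x hx
          have h1 := hloc x hx
          calc HLMax f x ^ p * ENNReal.ofReal (w x) ≤ _ :=
                mul_le_mul' (ENNReal.rpow_le_rpow h1 hp0.le) le_rfl
            _ ≤ _ := mul_le_mul' (ENNReal.rpow_add_le_mul_rpow_add_rpow _ _ hp.le) le_rfl
            _ = _ := by
              rw [hK5, mul_assoc (2 ^ (p-1)), add_mul, mul_assoc _ K4]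
      _ = 2 ^ (p-1) * ((∫⁻ x in ball a r, (⨆ ρ : Set.Ioi (0 : ℝ), (volume (ball x ρ.1))⁻¹ *
            ∫⁻ y in ball x ρ.1, g y) ^ p * ENNReal.ofReal (w x)) +
            (K5 * (N * P)) ^ p * m) := by
          rw [lintegral_const_mul' _ _ (ENNReal.rpow_ne_top_of_nonneg (by linarith) (by simp)),
            lintegral_add_right _ (by fun_prop), lintegral_const_mul _ (by fun_prop)]
      _ ≤ 2 ^ (p-1) * (K * (ApPair.DW n p A * K4 ^ p * (N * P) ^ p * m) +
            (K5 * (N * P)) ^ p * m) := by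
          refine mul_le_mul' le_rfl (add_le_add ?_ le_rfl)
          refine (lintegral_mono' Measure.restrict_le_self le_rfl).trans (hMg.trans ?_)
          rw [hgI]
          exact mul_le_mul' le_rfl hI2
      _ = _ := by
          rw [ENNReal.mul_rpow_of_nonneg K5 _ hp0.le, hK6]
          ring
  have hψ0 : ENNReal.ofReal (ψ₂ a r) ≠ 0 := by simpa using hψ₂ a r hr
  have hmp0 : m ^ (1/p) ≠ 0 := (ENNReal.rpow_pos (pos_iff_ne_zero.2 hm0) hm1).ne'
  have hmp1 : m ^ (1/p) ≠ ⊤ := ENNReal.rpow_ne_top_of_nonneg hp0'.le hm1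
  calc (ENNReal.ofReal (ψ₂ a r))⁻¹ * m ^ (-(1/p)) *
        (∫⁻ x in ball a r, HLMax f x ^ p * ENNReal.ofReal (w x)) ^ (1/p)
      ≤ (ENNReal.ofReal (ψ₂ a r))⁻¹ * m ^ (-(1/p)) * (K6 * (N * P) ^ p * m) ^ (1/p) :=
        mul_le_mul' le_rfl (ENNReal.rpow_le_rpow main hp0'.le)
    _ = ((ENNReal.ofReal (ψ₂ a r))⁻¹ * ENNReal.ofReal (ψ₂ a r)) * ((m ^ (1/p))⁻¹ * m ^ (1/p)) *
        (K6 ^ (1/p) * ENNReal.ofReal C * N) := by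
        rw [ENNReal.mul_rpow_of_nonneg _ _ hp0'.le, ENNReal.mul_rpow_of_nonneg _ _ hp0'.le, e',
          ENNReal.rpow_neg, hP, ENNReal.ofReal_mul hC.le]
        ring
    _ = K6 ^ (1/p) * ENNReal.ofReal C * N := by
        rw [ENNReal.inv_mul_cancel hψ0 ENNReal.ofReal_ne_top, ENNReal.inv_mul_cancel hmp0 hmp1]
        simp
end

section
/- Let 0 < α < n, 1 < p < n/α, 1/q = 1/p − α/n, and w ∈ A_{p,q}. Then there exists a constant C > 0, independent of f, a, and r, such that for every a ∈ ℝⁿ, r > 0, and f ∈ L^{p,w^p}_loc: ‖I_α f‖_{L^{q,w^q}(B(a,r))} ≤ C·w^q(B(a,r))^{1/q}·∫_r^∞ w^q(B(a,s))^{-1/q} ‖f‖_{L^{p,w^p}(B(a,s))} ds/s, where w^q(B) = ∫_B w(x)^q dx. -/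
open MeasureTheory Metric Set
open scoped ENNReal

theorem chain_sum_le (M : ℤ → ℝ≥0∞) (θ : ℝ≥0∞) (hθ : 1 < θ) (hθt : θ ≠ ⊤)
    (hM : ∀ k, θ * M k ≤ M (k + 1)) (hM0 : ∀ k, M k ≠ 0) (γ : ℝ) (hγ : 0 < γ) :
    ∑' k, (if M k ≤ 1 then M k ^ γ else 0) ≤ (1 - (θ⁻¹) ^ γ)⁻¹ := by
  have hθ0 : θ ≠ 0 := (zero_lt_one.trans hθ).ne'
  have hstep : ∀ k, M k ≤ θ⁻¹ * M (k + 1) := by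
    intro k
    rw [mul_comm, ← div_eq_mul_inv, ENNReal.le_div_iff_mul_le (Or.inl hθ0) (Or.inl hθt), mul_comm]
    exact hM k
  have hback : ∀ (k : ℤ) (j : ℕ), M (k - j) ≤ (θ⁻¹) ^ j * M k := by
    intro k j
    induction j with
    | zero => simp
    | succ j ih =>
      calc M (k - (j + 1 : ℕ)) ≤ θ⁻¹ * M (k - (j + 1 : ℕ) + 1) := hstep _
        _ = θ⁻¹ * M (k - j) := by congr 2; push_cast; ring
        _ ≤ θ⁻¹ * ((θ⁻¹) ^ j * M k) := by gcongr
        _ = _ := by rw [pow_succ]; ring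
  by_cases hne : ∃ k, M k ≤ 1
  swap
  · push Not at hne
    simp [fun k => not_le.mpr (hne k)]
  have hmono : Monotone M := by
    apply monotone_int_of_le_succ
    intro k
    exact le_trans (le_mul_of_one_le_left (by simp) hθ.le) (hM k)
  have hlt : θ⁻¹ < 1 := ENNReal.inv_lt_one.mpr hθ
  have hbdd : ∃ b : ℤ, ∀ z : ℤ, M z ≤ 1 → z ≤ b := by
    have ht : Filter.Tendsto (fun j : ℕ => (θ⁻¹) ^ j) Filter.atTop (nhds 0) :=
      ENNReal.tendsto_pow_atTop_nhds_zero_of_lt_one hlt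
    obtain ⟨j, hj⟩ := (ht.eventually (gt_mem_nhds (pos_iff_ne_zero.mpr (hM0 0)))).exists
    refine ⟨j, fun z hz => ?_⟩
    by_contra hcon
    push Not at hcon
    have h1 := hback j j
    have h2 : M j ≤ 1 := (hmono hcon.le).trans hz
    rw [sub_self] at h1
    have : M 0 ≤ (θ⁻¹) ^ j := h1.trans (by simpa using mul_le_mul_right h2 ((θ⁻¹) ^ j))
    exact absurd hj (not_lt.mpr this)
  obtain ⟨k0, hk0, hmax⟩ := Int.exists_greatest_of_bdd hbdd hne
  have hinj : Function.Injective (fun j : ℕ => k0 - (j : ℤ)) := by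
    intro a b h
    simp at h
    exact h
  rw [← hinj.tsum_eq]
  · rw [← ENNReal.tsum_geometric]
    apply ENNReal.tsum_le_tsum
    intro j
    split_ifs
    · calc M (k0 - j) ^ γ ≤ ((θ⁻¹) ^ j) ^ γ := by
            gcongr
            exact (hback k0 j).trans (by simpa using mul_le_mul_right hk0 ((θ⁻¹) ^ j))
        _ = _ := by
          rw [← ENNReal.rpow_natCast, ← ENNReal.rpow_mul, mul_comm, ENNReal.rpow_mul,
            ENNReal.rpow_natCast]
    · simp
  · intro k hk
    have : M k ≤ 1 := by
      by_contra h
      simp [h] at hk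
    have := hmax k this
    exact ⟨(k0 - k).toNat, by simp; omega⟩

theorem chain_sum_ge (M : ℤ → ℝ≥0∞) (θ : ℝ≥0∞) (hθ : 1 < θ) (hθt : θ ≠ ⊤)
    (hM : ∀ k, θ * M k ≤ M (k + 1)) (hMt : ∀ k, M k ≠ ⊤) (γ : ℝ) (hγ : 0 < γ) :
    ∑' k, (if 1 ≤ M k then M k ^ (-γ) else 0) ≤ (1 - (θ⁻¹) ^ γ)⁻¹ := by
  have h := chain_sum_le (fun k => (M (-k))⁻¹) θ hθ hθt ?_ ?_ γ hγ
  · refine le_trans (le_of_eq ?_) h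
    rw [← (Equiv.neg ℤ).tsum_eq]
    refine tsum_congr fun k => ?_
    simp [ENNReal.inv_le_one, ENNReal.rpow_neg, ENNReal.inv_rpow]
  · intro k
    have := hM (-(k+1))
    rw [show -(k+1)+1 = -k by ring] at this
    have hθ0 : θ ≠ 0 := (zero_lt_one.trans hθ).ne'
    have h2 := ENNReal.inv_le_inv.mpr this
    rw [ENNReal.mul_inv (Or.inl hθ0) (Or.inl hθt)] at h2
    calc θ * (M (-k))⁻¹ ≤ θ * (θ⁻¹ * (M (-(k+1)))⁻¹) := by gcongr
      _ = _ := by rw [← mul_assoc, ENNReal.mul_inv_cancel hθ0 hθt, one_mul]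
  · intro k
    simpa using hMt _

theorem geom_const_ne_top {θ : ℝ≥0∞} (hθ : 1 < θ) {γ : ℝ} (hγ : 0 < γ) :
    (1 - (θ⁻¹) ^ γ)⁻¹ ≠ ⊤ := by
  have : (θ⁻¹) ^ γ < 1 := ENNReal.rpow_lt_one (ENNReal.inv_lt_one.mpr hθ) hγ
  rw [Ne, ENNReal.inv_eq_top]
  exact (tsub_pos_of_lt this).ne'

/-- Ball mass at scale `4^k`. -/
noncomputable def bm {X : Type*} [PseudoMetricSpace X] [MeasurableSpace X] (μ : Measure X) (k : ℤ)
    (x : X) : ℝ≥0∞ := μ (ball x ((4 : ℝ) ^ k))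

open Classical in
/-- Kernel of the scale-`4^k` neighbourhood. -/
noncomputable def ker {X : Type*} [PseudoMetricSpace X] (k : ℤ) (x y : X) : ℝ≥0∞ :=
  if dist x y < (4 : ℝ) ^ k then 1 else 0

open Classical in
noncomputable def lo (t : ℝ≥0∞) : ℝ≥0∞ := if t ≤ 1 then 1 else 0

open Classical in
noncomputable def hi (t : ℝ≥0∞) : ℝ≥0∞ := if 1 ≤ t then 1 else 0

@[fun_prop] theorem measurable_lo : Measurable lo :=
  Measurable.ite measurableSet_Iic measurable_const measurable_const

@[fun_prop] theorem measurable_hi : Measurable hi :=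
  Measurable.ite measurableSet_Ici measurable_const measurable_const

structure Good {X : Type*} [PseudoMetricSpace X] [MeasurableSpace X] (θ D : ℝ≥0∞)
    (μ : Measure X) : Prop where
  pos : ∀ k x, bm μ k x ≠ 0
  fin : ∀ k x, bm μ k x ≠ ⊤
  growth : ∀ k x, θ * bm μ k x ≤ bm μ (k + 1) x
  comp : ∀ k x y, dist x y < (4 : ℝ) ^ k → bm μ k x ≤ D * bm μ k y

section bil
variable {X : Type*} [PseudoMetricSpace X] [SecondCountableTopology X] [MeasurableSpace X]
  [BorelSpace X]

theorem ker_comm (k : ℤ) (x y : X) : ker k x y = ker k y x := by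
  simp [ker, dist_comm]

@[fun_prop] theorem measurable_ker (k : ℤ) : Measurable (fun z : X × X => ker k z.1 z.2) :=
  Measurable.ite (measurableSet_lt (by fun_prop) measurable_const) measurable_const measurable_const

theorem measurable_ker' {Y : Type*} [MeasurableSpace Y] (k : ℤ) {f g : Y → X} (hf : Measurable f)
    (hg : Measurable g) : Measurable (fun z => ker k (f z) (g z)) :=
  (measurable_ker k).comp (hf.prodMk hg)

theorem lintegral_ker (μ : Measure X) (k : ℤ) (y : X) (φ : X → ℝ≥0∞) :
    ∫⁻ x, ker k x y * φ x ∂μ = ∫⁻ x in ball y ((4 : ℝ) ^ k), φ x ∂μ := by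
  rw [← lintegral_indicator measurableSet_ball]
  refine lintegral_congr fun x => ?_
  by_cases h : dist x y < (4 : ℝ) ^ k <;> simp [ker, indicator, h]

theorem measurable_bm (μ : Measure X) [SFinite μ] (k : ℤ) : Measurable (bm μ k) := by
  have : bm μ k = fun y => ∫⁻ x, ker k x y ∂μ := by
    funext y
    have := lintegral_ker μ k y (fun _ => 1)
    simp at this
    rw [this, bm]
  rw [this]
  exact Measurable.lintegral_prod_left' (f := fun z : X × X => ker k z.1 z.2) (measurable_ker k)

/-- pointwise geometric sum, large balls -/
theorem sum_hi (μ : Measure X) {θ D : ℝ≥0∞} (hθ : 1 < θ) (hθt : θ ≠ ⊤) (hG : Good θ D μ)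
    {p p' : ℝ} (hpp : p.HolderConjugate p') (t : ℝ≥0∞) (ht : t ≠ ⊤) (y : X) :
    ∑' k, hi (t ^ p * bm μ k y) * (t * bm μ k y ^ (-(1 / p'))) ≤
      (1 - (θ⁻¹) ^ (1 / p'))⁻¹ * t ^ p := by
  have hp0 : 0 < p := hpp.pos
  have hp0' : 0 < p' := hpp.symm.pos
  by_cases h0 : t = 0
  · simp [h0]
  have htp : t ^ p ≠ ⊤ := ENNReal.rpow_ne_top_of_nonneg hp0.le ht
  have hc := chain_sum_ge (fun k => t ^ p * bm μ k y) θ hθ hθt ?_ ?_ (1 / p') (by positivity)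
  · rw [mul_comm]
    refine le_trans (le_of_eq ?_) (mul_le_mul_right hc (t ^ p))
    rw [← ENNReal.tsum_mul_left]
    refine tsum_congr fun k => ?_
    unfold hi
    split_ifs
    · rw [ENNReal.mul_rpow_of_ne_zero (by simp [h0, ht]) (hG.pos k y), ← ENNReal.rpow_mul,
        one_mul, ← mul_assoc, ← ENNReal.rpow_add _ _ h0 ht]
      congr 1
      have : p + p * -(1 / p') = 1 := by
        have := hpp.sub_one_mul_conj
        field_simp
        linarith
      rw [this, ENNReal.rpow_one]
    · simp
  · intro k
    calc θ * (t ^ p * bm μ k y) = t ^ p * (θ * bm μ k y) := by ring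
      _ ≤ _ := by gcongr; exact hG.growth k y
  · intro k
    exact ENNReal.mul_ne_top htp (hG.fin k y)

/-- pointwise geometric sum, small balls -/
theorem sum_lo (μ : Measure X) {θ D : ℝ≥0∞} (hθ : 1 < θ) (hθt : θ ≠ ⊤) (hG : Good θ D μ)
    {p s : ℝ} (hp : 0 < p) (hs : 1 < s) (t : ℝ≥0∞) (ht : t ≠ ⊤) (y : X) :
    ∑' k, lo (t ^ p * bm μ k y) * ((t ^ p * bm μ k y) ^ s * (bm μ k y)⁻¹) ≤
      (1 - (θ⁻¹) ^ (s - 1))⁻¹ * t ^ p := by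
  by_cases h0 : t = 0
  · simp [h0, hp, zero_lt_one.trans hs]
  have htp : t ^ p ≠ ⊤ := ENNReal.rpow_ne_top_of_nonneg hp.le ht
  have htp0 : t ^ p ≠ 0 := by simp [h0, ht]
  have hc := chain_sum_le (fun k => t ^ p * bm μ k y) θ hθ hθt ?_ ?_ (s - 1) (by linarith)
  · rw [mul_comm]
    refine le_trans (le_of_eq ?_) (mul_le_mul_right hc (t ^ p))
    rw [← ENNReal.tsum_mul_left]
    refine tsum_congr fun k => ?_
    unfold lo
    split_ifs
    · rw [one_mul, ENNReal.rpow_sub _ _ (mul_ne_zero htp0 (hG.pos k y))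
        (ENNReal.mul_ne_top htp (hG.fin k y)), ENNReal.rpow_one, ENNReal.div_eq_inv_mul,
        ENNReal.mul_inv (Or.inl htp0) (Or.inl htp)]
      rw [← mul_assoc, ← mul_assoc, ENNReal.mul_inv_cancel htp0 htp, one_mul, mul_comm]
    · simp
  · intro k
    calc θ * (t ^ p * bm μ k y) = t ^ p * (θ * bm μ k y) := by ring
      _ ≤ _ := by gcongr; exact hG.growth k y
  · intro k
    exact mul_ne_zero htp0 (hG.pos k y)

theorem bm_inv_rpow_le (ν : Measure X) {θ D : ℝ≥0∞} (hD0 : D ≠ 0) (hDt : D ≠ ⊤) (hG : Good θ D ν)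
    {e : ℝ} (he : 0 ≤ e) (k : ℤ) (x y : X) (h : dist x y < (4 : ℝ) ^ k) :
    bm ν k x ^ (-e) ≤ D ^ e * bm ν k y ^ (-e) := by
  have h1 := hG.comp k y x (by rwa [dist_comm])
  rw [ENNReal.rpow_neg, ENNReal.rpow_neg]
  have h2 : bm ν k y ^ e ≤ D ^ e * bm ν k x ^ e := by
    rw [← ENNReal.mul_rpow_of_nonneg _ _ he]
    gcongr
  have h3 := ENNReal.inv_le_inv.mpr h2
  have hd0 : D ^ e ≠ 0 := by simp [hD0, hDt]
  have hdt : D ^ e ≠ ⊤ := ENNReal.rpow_ne_top_of_nonneg he hDt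
  rw [ENNReal.mul_inv (Or.inl hd0) (Or.inl hdt)] at h3
  calc (bm ν k x ^ e)⁻¹ = D ^ e * ((D ^ e)⁻¹ * (bm ν k x ^ e)⁻¹) := by
        rw [← mul_assoc, ENNReal.mul_inv_cancel hd0 hdt, one_mul]
    _ ≤ _ := by gcongr

theorem halfA (μ ν : Measure X) [SFinite μ] [SFinite ν] {θ D : ℝ≥0∞} (hθ : 1 < θ) (hθt : θ ≠ ⊤)
    (hD0 : D ≠ 0) (hDt : D ≠ ⊤)
    (hμ : Good θ D μ) (hν : Good θ D ν) {p p' q q' : ℝ} (hpp : p.HolderConjugate p')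
    (hqq : q.HolderConjugate q') (g h : X → ℝ≥0∞) (hg : Measurable g) (hh : Measurable h)
    (hgt : ∀ x, g x ≠ ⊤) (hg1 : ∫⁻ y, g y ^ p ∂μ ≤ 1) (hh1 : ∫⁻ x, h x ^ q' ∂ν ≤ 1) :
    ∑' k, ∫⁻ y, ∫⁻ x, ker k x y * (hi (g y ^ p * bm μ k y) *
      (g y * h x * bm μ k y ^ (-(1 / p')) * bm ν k x ^ (-(1 / q)))) ∂ν ∂μ ≤
      D ^ (1 / q) * (1 - (θ⁻¹) ^ (1 / p'))⁻¹ := by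
  have hq0 : 0 < q := hqq.pos
  have mμ := measurable_bm μ
  have mν := measurable_bm ν
  have key : ∀ k y, ∫⁻ x, ker k x y * (h x * bm ν k x ^ (-(1 / q))) ∂ν ≤ D ^ (1 / q) := by
    intro k y
    rw [lintegral_ker]
    calc ∫⁻ x in ball y ((4 : ℝ) ^ k), h x * bm ν k x ^ (-(1 / q)) ∂ν
        ≤ ∫⁻ x in ball y ((4 : ℝ) ^ k), (D ^ (1 / q) * bm ν k y ^ (-(1 / q))) * h x ∂ν := by
          refine setLIntegral_mono' measurableSet_ball fun x hx => ?_
          rw [mul_comm]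
          gcongr
          exact bm_inv_rpow_le ν hD0 hDt hν (by positivity) k x y hx
      _ = (D ^ (1 / q) * bm ν k y ^ (-(1 / q))) * ∫⁻ x in ball y ((4 : ℝ) ^ k), h x ∂ν := by
          rw [lintegral_const_mul _ hh]
      _ ≤ (D ^ (1 / q) * bm ν k y ^ (-(1 / q))) * bm ν k y ^ (1 / q) := by
          gcongr
          have := ENNReal.lintegral_mul_le_Lp_mul_Lq (ν.restrict (ball y ((4 : ℝ) ^ k))) hqq.symm
            (f := h) (g := fun _ => 1) hh.aemeasurable aemeasurable_const
          simp only [Pi.mul_apply, mul_one, ENNReal.one_rpow, lintegral_const, one_mul,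
            Measure.restrict_apply MeasurableSet.univ, univ_inter] at this
          refine this.trans ?_
          have h1 : (∫⁻ x in ball y ((4 : ℝ) ^ k), h x ^ q' ∂ν) ^ (1 / q') ≤ 1 := by
            apply ENNReal.rpow_le_one ((setLIntegral_le_lintegral _ _).trans hh1)
            have := hqq.symm.pos
            positivity
          calc _ ≤ 1 * ν (ball y ((4 : ℝ) ^ k)) ^ (1 / q) := by gcongr
            _ = _ := by rw [one_mul, bm]
      _ = _ := by
          rw [mul_assoc, ← ENNReal.rpow_add _ _ (hν.pos k y) (hν.fin k y)]
          simp
  calc _ ≤ ∑' k, ∫⁻ y, (hi (g y ^ p * bm μ k y) * (g y * bm μ k y ^ (-(1 / p')))) * D ^ (1 / q) ∂μ := by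
        refine ENNReal.tsum_le_tsum fun k => lintegral_mono fun y => ?_
        calc _ = ∫⁻ x, (hi (g y ^ p * bm μ k y) * (g y * bm μ k y ^ (-(1 / p')))) *
              (ker k x y * (h x * bm ν k x ^ (-(1 / q)))) ∂ν := by
                refine lintegral_congr fun x => ?_
                ring
          _ = (hi (g y ^ p * bm μ k y) * (g y * bm μ k y ^ (-(1 / p')))) *
              ∫⁻ x, (ker k x y * (h x * bm ν k x ^ (-(1 / q)))) ∂ν := by
                rw [lintegral_const_mul]
                have := measurable_ker' k (measurable_id (α := X)) (measurable_const (a := y))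
                have := mν k
                simp only [id] at *
                fun_prop
          _ ≤ _ := by gcongr; exact key k y
    _ = ∫⁻ y, ∑' k, (hi (g y ^ p * bm μ k y) * (g y * bm μ k y ^ (-(1 / p')))) * D ^ (1 / q) ∂μ := by
        rw [lintegral_tsum]
        intro k
        have := mμ k
        fun_prop
    _ ≤ ∫⁻ y, (D ^ (1 / q) * (1 - (θ⁻¹) ^ (1 / p'))⁻¹) * g y ^ p ∂μ := by
        refine lintegral_mono fun y => ?_
        rw [ENNReal.tsum_mul_right, mul_comm, mul_assoc]
        gcongr
        exact sum_hi μ hθ hθt hμ hpp (g y) (hgt y) y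
    _ ≤ _ := by
        rw [lintegral_const_mul _ (by fun_prop)]
        calc _ ≤ D ^ (1 / q) * (1 - (θ⁻¹) ^ (1 / p'))⁻¹ * 1 := by gcongr
          _ = _ := mul_one _

theorem halfB (μ ν : Measure X) [SFinite μ] [SFinite ν] {θ D : ℝ≥0∞} (hθ : 1 < θ) (hθt : θ ≠ ⊤)
    (hD0 : D ≠ 0) (hDt : D ≠ ⊤)
    (hμ : Good θ D μ) (hν : Good θ D ν) {p s : ℝ} (hp : 0 < p) (hs : 1 < s)
    (g : X → ℝ≥0∞) (hg : Measurable g)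
    (hgt : ∀ x, g x ≠ ⊤) (hg1 : ∫⁻ y, g y ^ p ∂μ ≤ 1) :
    ∑' k, ∫⁻ y, ∫⁻ x, ker k x y * (lo (g y ^ p * bm μ k y) *
      ((g y ^ p * bm μ k y) ^ s * (bm μ k y)⁻¹ * (bm ν k x)⁻¹)) ∂ν ∂μ ≤
      D * (1 - (θ⁻¹) ^ (s - 1))⁻¹ := by
  have mμ := measurable_bm μ
  have mν := measurable_bm ν
  have key : ∀ k y, ∫⁻ x, ker k x y * (bm ν k x)⁻¹ ∂ν ≤ D := by
    intro k y
    rw [lintegral_ker]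
    calc ∫⁻ x in ball y ((4 : ℝ) ^ k), (bm ν k x)⁻¹ ∂ν
        ≤ ∫⁻ x in ball y ((4 : ℝ) ^ k), D * (bm ν k y)⁻¹ ∂ν := by
          refine setLIntegral_mono' measurableSet_ball fun x hx => ?_
          have := bm_inv_rpow_le ν hD0 hDt hν zero_le_one k x y hx
          simpa [ENNReal.rpow_neg_one] using this
      _ = D * ((bm ν k y)⁻¹ * bm ν k y) := by simp [bm, mul_assoc]
      _ = _ := by rw [ENNReal.inv_mul_cancel (hν.pos k y) (hν.fin k y), mul_one]
  calc _ ≤ ∑' k, ∫⁻ y, (lo (g y ^ p * bm μ k y) * ((g y ^ p * bm μ k y) ^ s * (bm μ k y)⁻¹)) * D ∂μ := by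
        refine ENNReal.tsum_le_tsum fun k => lintegral_mono fun y => ?_
        calc _ = ∫⁻ x, (lo (g y ^ p * bm μ k y) * ((g y ^ p * bm μ k y) ^ s * (bm μ k y)⁻¹)) *
              (ker k x y * (bm ν k x)⁻¹) ∂ν := by
                refine lintegral_congr fun x => ?_
                ring
          _ = (lo (g y ^ p * bm μ k y) * ((g y ^ p * bm μ k y) ^ s * (bm μ k y)⁻¹)) *
              ∫⁻ x, (ker k x y * (bm ν k x)⁻¹) ∂ν := by
                rw [lintegral_const_mul]
                have := measurable_ker' k (measurable_id (α := X)) (measurable_const (a := y))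
                have := mν k
                simp only [id] at *
                fun_prop
          _ ≤ _ := by gcongr; exact key k y
    _ = ∫⁻ y, ∑' k, (lo (g y ^ p * bm μ k y) * ((g y ^ p * bm μ k y) ^ s * (bm μ k y)⁻¹)) * D ∂μ := by
        rw [lintegral_tsum]
        intro k
        have := mμ k
        fun_prop
    _ ≤ ∫⁻ y, (D * (1 - (θ⁻¹) ^ (s - 1))⁻¹) * g y ^ p ∂μ := by
        refine lintegral_mono fun y => ?_
        rw [ENNReal.tsum_mul_right, mul_comm, mul_assoc]
        gcongr
        exact sum_lo μ hθ hθt hμ hp hs (g y) (hgt y) y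
    _ ≤ _ := by
        rw [lintegral_const_mul _ (by fun_prop)]
        calc _ ≤ D * (1 - (θ⁻¹) ^ (s - 1))⁻¹ * 1 := by gcongr
          _ = _ := mul_one _

/-- The constant in the bilinear estimate. -/
noncomputable def bilC (θ D : ℝ≥0∞) (p p' q q' : ℝ) : ℝ≥0∞ :=
  D ^ (1 / q) * (1 - (θ⁻¹) ^ (1 / p'))⁻¹ + D ^ (1 / p') * (1 - (θ⁻¹) ^ (1 / q))⁻¹ +
  D * (1 - (θ⁻¹) ^ (1 / p + 1 / q' - 1))⁻¹ + D * (1 - (θ⁻¹) ^ (1 / p + 1 / q' - 1))⁻¹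

theorem bilC_ne_top {θ D : ℝ≥0∞} (hθ : 1 < θ) (hDt : D ≠ ⊤) {p p' q q' : ℝ}
    (hpp : p.HolderConjugate p') (hqq : q.HolderConjugate q') (hs : 1 < 1 / p + 1 / q') :
    bilC θ D p p' q q' ≠ ⊤ := by
  have h1 := hpp.symm.pos
  have h2 := hqq.pos
  have h3 : D ^ (1 / q) ≠ ⊤ := ENNReal.rpow_ne_top_of_nonneg (by positivity) hDt
  have h4 : D ^ (1 / p') ≠ ⊤ := ENNReal.rpow_ne_top_of_nonneg (by positivity) hDt
  have h5 := geom_const_ne_top hθ (γ := 1 / p') (by positivity)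
  have h6 := geom_const_ne_top hθ (γ := 1 / q) (by positivity)
  have h7 := geom_const_ne_top hθ (γ := 1 / p + 1 / q' - 1) (by linarith)
  unfold bilC
  exact ENNReal.add_ne_top.2 ⟨ENNReal.add_ne_top.2 ⟨ENNReal.add_ne_top.2
    ⟨ENNReal.mul_ne_top h3 h5, ENNReal.mul_ne_top h4 h6⟩, ENNReal.mul_ne_top hDt h7⟩,
    ENNReal.mul_ne_top hDt h7⟩

theorem pointwise_split {m n g h : ℝ≥0∞} (hm : m ≠ 0) (hmt : m ≠ ⊤) (hn : n ≠ 0) (hnt : n ≠ ⊤)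
    {p p' q q' : ℝ} (hpp : p.HolderConjugate p') (hqq : q.HolderConjugate q') :
    g * h * m ^ (-(1 / p')) * n ^ (-(1 / q)) ≤
      hi (g ^ p * m) * (g * h * m ^ (-(1 / p')) * n ^ (-(1 / q))) +
      hi (h ^ q' * n) * (h * g * n ^ (-(1 / q)) * m ^ (-(1 / p'))) +
      lo (g ^ p * m) * ((g ^ p * m) ^ (1 / p + 1 / q') * m⁻¹ * n⁻¹) +
      lo (h ^ q' * n) * ((h ^ q' * n) ^ (1 / p + 1 / q') * n⁻¹ * m⁻¹) := by
  by_cases h1 : 1 ≤ g ^ p * m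
  · refine le_trans ?_ (le_trans le_self_add (le_trans le_self_add le_self_add))
    simp [hi, h1]
  by_cases h2 : 1 ≤ h ^ q' * n
  · refine le_trans ?_ (le_trans (le_trans le_add_self le_self_add) le_self_add)
    simp only [hi, h2, if_true, one_mul]
    apply le_of_eq
    ring
  push Not at h1 h2
  have hp := hpp.pos
  have hq' := hqq.symm.pos
  have e : g * h * m ^ (-(1 / p')) * n ^ (-(1 / q)) =
      ((g ^ p * m) ^ (1 / p) * (h ^ q' * n) ^ (1 / q')) * (m⁻¹ * n⁻¹) := by
    rw [ENNReal.mul_rpow_of_nonneg _ _ (by positivity), ENNReal.mul_rpow_of_nonneg _ _ (by positivity),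
      ← ENNReal.rpow_mul, ← ENNReal.rpow_mul, mul_one_div_cancel hp.ne', mul_one_div_cancel hq'.ne',
      ENNReal.rpow_one, ENNReal.rpow_one]
    have a1 : m ^ (-(1 / p')) = m ^ (1 / p) * m⁻¹ := by
      rw [← ENNReal.rpow_neg_one, ← ENNReal.rpow_add _ _ hm hmt]
      congr 1
      have := hpp.inv_add_inv_eq_one
      simp only [one_div]
      linarith
    have a2 : n ^ (-(1 / q)) = n ^ (1 / q') * n⁻¹ := by
      rw [← ENNReal.rpow_neg_one, ← ENNReal.rpow_add _ _ hn hnt]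
      congr 1
      have := hqq.inv_add_inv_eq_one
      simp only [one_div]
      linarith
    rw [a1, a2]
    ring
  rw [e]
  have hs : ∀ A B : ℝ≥0∞, A ≤ B → A ^ (1 / p) * B ^ (1 / q') ≤ B ^ (1 / p + 1 / q') := by
    intro A B hAB
    rw [ENNReal.rpow_add_of_nonneg _ _ (by positivity) (by positivity)]
    gcongr
  have hs' : ∀ A B : ℝ≥0∞, A ≤ B → B ^ (1 / p) * A ^ (1 / q') ≤ B ^ (1 / p + 1 / q') := by
    intro A B hAB
    rw [ENNReal.rpow_add_of_nonneg _ _ (by positivity) (by positivity)]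
    gcongr
  rcases le_total (g ^ p * m) (h ^ q' * n) with h3 | h3
  · refine le_trans ?_ le_add_self
    simp only [lo, h2.le, if_true, one_mul]
    rw [mul_assoc ((h ^ q' * n) ^ (1 / p + 1 / q')), mul_comm n⁻¹]
    gcongr
    exact hs _ _ h3
  · refine le_trans ?_ (le_trans le_add_self le_self_add)
    simp only [lo, h1.le, if_true, one_mul]
    rw [mul_assoc ((g ^ p * m) ^ (1 / p + 1 / q'))]
    gcongr
    exact hs' _ _ h3

theorem lintegral_add4 {Y : Type*} [MeasurableSpace Y] (μ : Measure Y) {f1 f2 f3 : Y → ℝ≥0∞}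
    (f4 : Y → ℝ≥0∞) (h1 : Measurable f1) (h2 : Measurable f2) (h3 : Measurable f3) :
    ∫⁻ x, f1 x + f2 x + f3 x + f4 x ∂μ =
      ∫⁻ x, f1 x ∂μ + ∫⁻ x, f2 x ∂μ + ∫⁻ x, f3 x ∂μ + ∫⁻ x, f4 x ∂μ := by
  rw [lintegral_add_left (by fun_prop), lintegral_add_left (by fun_prop),
    lintegral_add_left (by fun_prop)]

theorem bilinear (μ ν : Measure X) [SFinite μ] [SFinite ν] {θ D : ℝ≥0∞} (hθ : 1 < θ) (hθt : θ ≠ ⊤)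
    (hD0 : D ≠ 0) (hDt : D ≠ ⊤)
    (hμ : Good θ D μ) (hν : Good θ D ν) {p p' q q' : ℝ} (hpp : p.HolderConjugate p')
    (hqq : q.HolderConjugate q') (hs : 1 < 1 / p + 1 / q')
    (g h : X → ℝ≥0∞) (hg : Measurable g) (hh : Measurable h)
    (hgt : ∀ x, g x ≠ ⊤) (hht : ∀ x, h x ≠ ⊤)
    (hg1 : ∫⁻ y, g y ^ p ∂μ ≤ 1) (hh1 : ∫⁻ x, h x ^ q' ∂ν ≤ 1) :
    ∑' k, ∫⁻ x, ∫⁻ y, ker k x y * (g y * h x * bm μ k y ^ (-(1 / p')) * bm ν k x ^ (-(1 / q))) ∂μ ∂ν ≤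
      bilC θ D p p' q q' := by
  have mμ := measurable_bm μ
  have mν := measurable_bm ν
  have A1 := halfA μ ν hθ hθt hD0 hDt hμ hν hpp hqq g h hg hh hgt hg1 hh1
  have A2 := halfA ν μ hθ hθt hD0 hDt hν hμ hqq.symm hpp.symm h g hh hg hht hh1 hg1
  have B1 := halfB μ ν hθ hθt hD0 hDt hμ hν hpp.pos hs g hg hgt hg1
  have B2 := halfB ν μ hθ hθt hD0 hDt hν hμ hqq.symm.pos hs h hh hht hh1
  refine le_trans ?_ (add_le_add (add_le_add (add_le_add A1 A2) B1) B2)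
  rw [← ENNReal.tsum_add, ← ENNReal.tsum_add, ← ENNReal.tsum_add]
  refine ENNReal.tsum_le_tsum fun k => ?_
  have mk1 : Measurable (fun z : X × X => ker k z.1 z.2) := measurable_ker k
  have mk2 : Measurable (fun z : X × X => ker k z.2 z.1) := measurable_ker' k measurable_snd measurable_fst
  have mμ1 : Measurable (fun z : X × X => bm μ k z.1) := (mμ k).comp measurable_fst
  have mμ2 : Measurable (fun z : X × X => bm μ k z.2) := (mμ k).comp measurable_snd
  have mν1 : Measurable (fun z : X × X => bm ν k z.1) := (mν k).comp measurable_fst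
  have mν2 : Measurable (fun z : X × X => bm ν k z.2) := (mν k).comp measurable_snd
  rw [lintegral_lintegral_swap (μ := μ) (ν := ν) (f := fun y x => ker k x y * (hi (g y ^ p * bm μ k y) *
      (g y * h x * bm μ k y ^ (-(1 / p')) * bm ν k x ^ (-(1 / q)))))
      (by unfold Function.uncurry; simp only; fun_prop)]
  rw [lintegral_lintegral_swap (μ := μ) (ν := ν) (f := fun y x => ker k x y * (lo (g y ^ p * bm μ k y) *
      ((g y ^ p * bm μ k y) ^ (1 / p + 1 / q') * (bm μ k y)⁻¹ * (bm ν k x)⁻¹)))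
      (by unfold Function.uncurry; simp only; fun_prop)]
  have sec : ∀ F : X × X → ℝ≥0∞, Measurable F → Measurable fun x => ∫⁻ y, F (x, y) ∂μ :=
    fun F hF => hF.lintegral_prod_right'
  have m1 : Measurable fun z : X × X => ker k z.1 z.2 * (hi (g z.2 ^ p * bm μ k z.2) *
      (g z.2 * h z.1 * bm μ k z.2 ^ (-(1 / p')) * bm ν k z.1 ^ (-(1 / q)))) := by fun_prop
  have m2 : Measurable fun z : X × X => ker k z.2 z.1 * (hi (h z.1 ^ q' * bm ν k z.1) *
      (h z.1 * g z.2 * bm ν k z.1 ^ (-(1 / q)) * bm μ k z.2 ^ (-(1 / p')))) := by fun_prop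
  have m3 : Measurable fun z : X × X => ker k z.1 z.2 * (lo (g z.2 ^ p * bm μ k z.2) *
      ((g z.2 ^ p * bm μ k z.2) ^ (1 / p + 1 / q') * (bm μ k z.2)⁻¹ * (bm ν k z.1)⁻¹)) := by fun_prop
  refine le_trans ?_ (le_of_eq (lintegral_add4 ν _ (sec _ m1) (sec _ m2) (sec _ m3)))
  refine lintegral_mono fun x => ?_
  have sx : ∀ F : X × X → ℝ≥0∞, Measurable F → Measurable fun y => F (x, y) :=
    fun F hF => hF.comp measurable_prodMk_left
  simp only
  refine le_trans ?_ (le_of_eq (lintegral_add4 μ _ (sx _ m1) (sx _ m2) (sx _ m3)))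
  refine lintegral_mono fun y => ?_
  simp only
  rw [ker_comm k y x, ← mul_add, ← mul_add, ← mul_add]
  gcongr
  exact pointwise_split (hμ.pos k y) (hμ.fin k y) (hν.pos k x) (hν.fin k x) hpp hqq

/-- The discretised kernel. -/
noncomputable def TK (μ ν : Measure X) (p' q : ℝ) (x y : X) : ℝ≥0∞ :=
  ∑' k, ker k x y * (bm μ k y ^ (-(1 / p')) * bm ν k x ^ (-(1 / q)))

theorem measurable_TK (μ ν : Measure X) [SFinite μ] [SFinite ν] (p' q : ℝ) :
    Measurable (fun z : X × X => TK μ ν p' q z.1 z.2) := by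
  unfold TK
  refine Measurable.tsum fun k => ?_
  have mμ2 : Measurable (fun z : X × X => bm μ k z.2) := (measurable_bm μ k).comp measurable_snd
  have mν1 : Measurable (fun z : X × X => bm ν k z.1) := (measurable_bm ν k).comp measurable_fst
  have mk1 : Measurable (fun z : X × X => ker k z.1 z.2) := measurable_ker k
  fun_prop

theorem measurable_TK_right (μ ν : Measure X) [SFinite μ] [SFinite ν] (p' q : ℝ) (x : X) :
    Measurable (fun y => TK μ ν p' q x y) := by
  have h : Measurable (fun y : X => (x, y)) := measurable_prodMk_left
  exact (measurable_TK μ ν p' q).comp h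

theorem measurable_TKg (μ ν : Measure X) [SFinite μ] [SFinite ν] (p' q : ℝ) (g : X → ℝ≥0∞)
    (hg : Measurable g) : Measurable (fun x => ∫⁻ y, TK μ ν p' q x y * g y ∂μ) := by
  have h : Measurable (fun z : X × X => TK μ ν p' q z.1 z.2 * g z.2) :=
    (measurable_TK μ ν p' q).mul (hg.comp measurable_snd)
  exact h.lintegral_prod_right'

theorem bilinear' (μ ν : Measure X) [SFinite μ] [SFinite ν] {θ D : ℝ≥0∞} (hθ : 1 < θ) (hθt : θ ≠ ⊤)
    (hD0 : D ≠ 0) (hDt : D ≠ ⊤)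
    (hμ : Good θ D μ) (hν : Good θ D ν) {p p' q q' : ℝ} (hpp : p.HolderConjugate p')
    (hqq : q.HolderConjugate q') (hs : 1 < 1 / p + 1 / q')
    (g h : X → ℝ≥0∞) (hg : Measurable g) (hh : Measurable h)
    (hgt : ∀ x, g x ≠ ⊤) (hht : ∀ x, h x ≠ ⊤)
    (hg1 : ∫⁻ y, g y ^ p ∂μ ≤ 1) (hh1 : ∫⁻ x, h x ^ q' ∂ν ≤ 1) :
    ∫⁻ x, (∫⁻ y, TK μ ν p' q x y * g y ∂μ) * h x ∂ν ≤ bilC θ D p p' q q' := by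
  refine le_trans (le_of_eq ?_) (bilinear μ ν hθ hθt hD0 hDt hμ hν hpp hqq hs g h hg hh hgt hht hg1 hh1)
  have mF : ∀ k, Measurable fun z : X × X =>
      ker k z.1 z.2 * (g z.2 * h z.1 * bm μ k z.2 ^ (-(1 / p')) * bm ν k z.1 ^ (-(1 / q))) := by
    intro k
    have mμ2 : Measurable (fun z : X × X => bm μ k z.2) := (measurable_bm μ k).comp measurable_snd
    have mν1 : Measurable (fun z : X × X => bm ν k z.1) := (measurable_bm ν k).comp measurable_fst
    have mk1 : Measurable (fun z : X × X => ker k z.1 z.2) := measurable_ker k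
    fun_prop
  rw [← lintegral_tsum fun k => ((mF k).lintegral_prod_right').aemeasurable]
  refine lintegral_congr fun x => ?_
  simp only
  refine Eq.trans ?_ (lintegral_tsum fun k =>
    ((mF k).comp (measurable_prodMk_left (x := x))).aemeasurable)
  rw [← lintegral_mul_const'  _ _ (hht x)]
  refine lintegral_congr fun y => ?_
  simp only [TK]
  rw [← ENNReal.tsum_mul_right, ← ENNReal.tsum_mul_right]
  refine tsum_congr fun k => ?_
  ring

theorem dual_bound (ν : Measure X) (hfin : ∀ (x : X) (k : ℕ), ν (ball x ((4 : ℝ) ^ (k : ℤ))) ≠ ⊤)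
    {q q' : ℝ} (hqq : q.HolderConjugate q') (F : X → ℝ≥0∞) (hF : Measurable F) (C : ℝ≥0∞)
    (H : ∀ h : X → ℝ≥0∞, Measurable h → (∀ x, h x ≠ ⊤) → ∫⁻ x, h x ^ q' ∂ν ≤ 1 →
      ∫⁻ x, F x * h x ∂ν ≤ C) :
    (∫⁻ x, F x ^ q ∂ν) ^ (1 / q) ≤ C := by
  rcases isEmpty_or_nonempty X with hX | ⟨⟨x0⟩⟩
  · have : ν = 0 := Measure.eq_zero_of_isEmpty ν
    have := hqq.pos
    simp [*]
  have hq := hqq.pos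
  have hq' := hqq.symm.pos
  let FN : ℕ → X → ℝ≥0∞ := fun N => (ball x0 ((4 : ℝ) ^ (N : ℤ))).indicator fun x => min (F x) N
  have mFN : ∀ N, Measurable (FN N) := fun N =>
    (hF.min measurable_const).indicator measurableSet_ball
  have FNt : ∀ N x, FN N x ≠ ⊤ := by
    intro N x
    simp only [FN, indicator]
    split_ifs
    · exact ((min_le_right _ _).trans_lt (ENNReal.natCast_lt_top N)).ne
    · simp
  have FNle : ∀ N x, FN N x ≤ F x := by
    intro N x
    simp only [FN, indicator]
    split_ifs
    · exact min_le_left _ _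
    · simp
  have mono : Monotone FN := by
    intro N M hNM x
    simp only [FN]
    refine le_trans (indicator_le_indicator_of_subset (ball_subset_ball
      (ε₂ := (4 : ℝ) ^ (M : ℤ)) ?_) (fun _ => by simp) x) ?_
    · exact zpow_le_zpow_right₀ (by norm_num) (by exact_mod_cast hNM)
    · refine indicator_le_indicator ?_
      gcongr
  have sup : ∀ x, ⨆ N, FN N x = F x := by
    intro x
    apply le_antisymm (iSup_le fun N => FNle N x)
    have : F x = ⨆ N : ℕ, min (F x) N := by
      rw [← inf_iSup_eq, ENNReal.iSup_natCast]; simp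
    rw [this]
    obtain ⟨M, hM⟩ : ∃ M : ℕ, dist x x0 < (4 : ℝ) ^ M := pow_unbounded_of_one_lt _ (by norm_num)
    refine iSup_le fun N => le_trans ?_ (le_iSup _ (max N M))
    have : x ∈ ball x0 ((4 : ℝ) ^ ((max N M : ℕ) : ℤ)) := by
      rw [mem_ball, zpow_natCast]
      exact hM.trans_le (pow_le_pow_right₀ (by norm_num) (le_max_right _ _))
    simp only [FN, indicator_of_mem this]
    gcongr
    exact le_max_left _ _
  have J : ∀ N, ∫⁻ x, FN N x ^ q ∂ν ≤ C ^ q := by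
    intro N
    set J := ∫⁻ x, FN N x ^ q ∂ν with hJ
    by_cases hJ0 : J = 0
    · simp [hJ0]
    have hJt : J ≠ ⊤ := by
      have : J ≤ (N : ℝ≥0∞) ^ q * ν (ball x0 ((4 : ℝ) ^ (N : ℤ))) := by
        calc J ≤ ∫⁻ x, (ball x0 ((4 : ℝ) ^ (N : ℤ))).indicator (fun _ => (N : ℝ≥0∞) ^ q) x ∂ν := by
              refine lintegral_mono fun x => ?_
              simp only [FN, indicator]
              split_ifs
              · gcongr
                exact min_le_right _ _
              · simp [hq]
          _ = _ := by rw [lintegral_indicator measurableSet_ball]; simp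
      exact (this.trans_lt (ENNReal.mul_lt_top
        (ENNReal.rpow_lt_top_of_nonneg hq.le (ENNReal.natCast_ne_top N)) (hfin x0 N).lt_top)).ne
    have hc0 : J ^ (-(1 / q')) ≠ 0 := by simp [ENNReal.rpow_eq_zero_iff, hJ0, hJt]
    have hct : J ^ (-(1 / q')) ≠ ⊤ := by simp [ENNReal.rpow_eq_top_iff, hJ0, hJt]
    have hq1 : 0 < q - 1 := hqq.sub_one_pos
    have hh := H (fun x => FN N x ^ (q - 1) * J ^ (-(1 / q')))
      (((mFN N).pow_const _).mul_const _)
      (fun x => ENNReal.mul_ne_top (ENNReal.rpow_ne_top_of_nonneg hq1.le (FNt N x)) hct) ?_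
    · have e1 : J ^ (1 / q) ≤ C := by
        refine le_trans ?_ hh
        calc J ^ (1 / q) = J * J ^ (-(1 / q')) := by
              conv_rhs => rw [← ENNReal.rpow_one J]
              rw [← ENNReal.rpow_mul, one_mul, ← ENNReal.rpow_add _ _ hJ0 hJt]
              congr 1
              have := hqq.inv_add_inv_eq_one
              simp only [one_div]
              linarith
          _ = ∫⁻ x, FN N x ^ q * J ^ (-(1 / q')) ∂ν := by
              rw [lintegral_mul_const _ ((mFN N).pow_const _)]
          _ ≤ _ := by
              refine lintegral_mono fun x => ?_
              simp only
              rw [← mul_assoc]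
              gcongr
              calc FN N x ^ q = FN N x ^ (1 : ℝ) * FN N x ^ (q - 1) := by
                    rw [← ENNReal.rpow_add_of_nonneg _ _ zero_le_one hq1.le]; congr 1; ring
                _ ≤ _ := by rw [ENNReal.rpow_one]; gcongr; exact FNle N x
      calc J = (J ^ (1 / q)) ^ q := by
            rw [← ENNReal.rpow_mul, one_div_mul_cancel hq.ne', ENNReal.rpow_one]
        _ ≤ _ := by gcongr
    · apply le_of_eq
      calc ∫⁻ x, (FN N x ^ (q - 1) * J ^ (-(1 / q'))) ^ q' ∂ν = ∫⁻ x, FN N x ^ q * J⁻¹ ∂ν := by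
            refine lintegral_congr fun x => ?_
            rw [ENNReal.mul_rpow_of_nonneg _ _ hq'.le, ← ENNReal.rpow_mul, ← ENNReal.rpow_mul,
              hqq.sub_one_mul_conj, neg_mul, one_div_mul_cancel hq'.ne', ENNReal.rpow_neg_one]
        _ = 1 := by
            rw [lintegral_mul_const _ ((mFN N).pow_const _), ENNReal.mul_inv_cancel hJ0 hJt]
  have fin : ∫⁻ x, F x ^ q ∂ν ≤ C ^ q := by
    have : ∀ x, F x ^ q = ⨆ N, FN N x ^ q := by
      intro x
      rw [← sup x]
      exact (ENNReal.orderIsoRpow q hq).map_iSup _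
    simp_rw [this]
    rw [lintegral_iSup (fun N => (mFN N).pow_const _)
      (fun N M hNM x => ENNReal.rpow_le_rpow (mono hNM x) hq.le)]
    exact iSup_le J
  calc _ ≤ (C ^ q) ^ (1 / q) := by gcongr
    _ = C := by rw [← ENNReal.rpow_mul, mul_one_div_cancel hq.ne', ENNReal.rpow_one]

theorem strong (μ ν : Measure X) [SFinite μ] [SFinite ν] {θ D : ℝ≥0∞} (hθ : 1 < θ) (hθt : θ ≠ ⊤)
    (hD0 : D ≠ 0) (hDt : D ≠ ⊤)
    (hμ : Good θ D μ) (hν : Good θ D ν) {p p' q q' : ℝ} (hpp : p.HolderConjugate p')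
    (hqq : q.HolderConjugate q') (hs : 1 < 1 / p + 1 / q')
    (g : X → ℝ≥0∞) (hg : Measurable g) (hgt : ∀ x, g x ≠ ⊤) (hgf : ∫⁻ y, g y ^ p ∂μ ≠ ⊤) :
    (∫⁻ x, (∫⁻ y, TK μ ν p' q x y * g y ∂μ) ^ q ∂ν) ^ (1 / q) ≤
      bilC θ D p p' q q' * (∫⁻ y, g y ^ p ∂μ) ^ (1 / p) := by
  have hp := hpp.pos
  have hq := hqq.pos
  have mTK := measurable_TK μ ν p' q
  by_cases h0 : ∫⁻ y, g y ^ p ∂μ = 0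
  · have : ∀ᵐ y ∂μ, g y = 0 := by
      rw [lintegral_eq_zero_iff (hg.pow_const _)] at h0
      filter_upwards [h0] with y hy
      simpa [hp, not_lt.mpr hp.le] using hy
    have h2 : ∀ x, ∫⁻ y, TK μ ν p' q x y * g y ∂μ = 0 := by
      intro x
      rw [← lintegral_zero]
      refine lintegral_congr_ae ?_
      filter_upwards [this] with y hy
      simp [hy]
    simp [h2, hq]
  set G := (∫⁻ y, g y ^ p ∂μ) ^ (1 / p) with hG
  have hG0 : G ≠ 0 := by simp [hG, ENNReal.rpow_eq_zero_iff, h0, hgf]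
  have hGt : G ≠ ⊤ := ENNReal.rpow_ne_top_of_nonneg (by positivity) hgf
  have hmF : Measurable fun x => ∫⁻ y, TK μ ν p' q x y * g y ∂μ :=
    Measurable.lintegral_prod_right' (f := fun z : X × X => TK μ ν p' q z.1 z.2 * g z.2)
      (by fun_prop)
  refine dual_bound ν (fun x k => hν.fin k x) hqq _ hmF _ fun h mh hht hh1 => ?_
  have hb := bilinear' μ ν hθ hθt hD0 hDt hμ hν hpp hqq hs (fun y => g y * G⁻¹) h
    (hg.mul_const _) mh (fun x => ENNReal.mul_ne_top (hgt x) (ENNReal.inv_ne_top.mpr hG0)) hht ?_ hh1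
  · have e : ∀ x, ∫⁻ y, TK μ ν p' q x y * (g y * G⁻¹) ∂μ =
        G⁻¹ * ∫⁻ y, TK μ ν p' q x y * g y ∂μ := by
      intro x
      rw [← lintegral_const_mul' _ _ (ENNReal.inv_ne_top.mpr hG0)]
      refine lintegral_congr fun y => ?_
      ring
    simp_rw [e, mul_assoc] at hb
    rw [lintegral_const_mul' _ _ (ENNReal.inv_ne_top.mpr hG0)] at hb
    calc _ = G * (G⁻¹ * ∫⁻ x, (∫⁻ y, TK μ ν p' q x y * g y ∂μ) * h x ∂ν) := by
          rw [← mul_assoc, ENNReal.mul_inv_cancel hG0 hGt, one_mul]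
      _ ≤ G * bilC θ D p p' q q' := by gcongr
      _ = _ := mul_comm _ _
  · simp_rw [ENNReal.mul_rpow_of_nonneg _ _ hp.le]
    rw [lintegral_mul_const _ (hg.pow_const _), ENNReal.inv_rpow, hG, ← ENNReal.rpow_mul,
      one_div_mul_cancel hp.ne', ENNReal.rpow_one, ENNReal.mul_inv_cancel h0 hgf]

end bil

section euclid
variable {n : ℕ}

theorem vol_ball (a : EuclideanSpace ℝ (Fin n)) {r : ℝ} (hr : 0 < r) :
    volume (ball a r) = ENNReal.ofReal (r ^ n) * volume (ball (0 : EuclideanSpace ℝ (Fin n)) 1) := by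
  have := Measure.addHaar_ball_of_pos (volume : Measure (EuclideanSpace ℝ (Fin n))) a hr
  simpa using this

theorem vol_ball_ne_zero (a : EuclideanSpace ℝ (Fin n)) {r : ℝ} (hr : 0 < r) : volume (ball a r) ≠ 0 :=
  (measure_ball_pos volume a hr).ne'

theorem vol_ball_ne_top (a : EuclideanSpace ℝ (Fin n)) (r : ℝ) : volume (ball a r) ≠ ⊤ :=
  measure_ball_lt_top.ne

theorem vol_ball_rpow (a : EuclideanSpace ℝ (Fin n)) {r : ℝ} (hr : 0 < r) {β γ : ℝ} (hβ : 0 ≤ β) (hγ : n * β = γ) :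
    volume (ball a r) ^ β = ENNReal.ofReal (r ^ γ) * volume (ball (0 : EuclideanSpace ℝ (Fin n)) 1) ^ β := by
  rw [vol_ball a hr, ENNReal.mul_rpow_of_nonneg _ _ hβ, ENNReal.ofReal_rpow_of_pos (by positivity),
    ← Real.rpow_natCast, ← Real.rpow_mul hr.le, hγ]

/-- Comparison of the weighted mass of a ball and of a large subset. -/
theorem compar (ν μ : Measure (EuclideanSpace ℝ (Fin n))) {e1 e2 β : ℝ} {K : ℝ≥0∞} (he1 : 0 < e1) (he2 : 0 < e2)
    (hβ : 0 < β)
    (H1 : ∀ S : Set (EuclideanSpace ℝ (Fin n)), MeasurableSet S → volume S ^ β ≤ ν S ^ e1 * μ S ^ e2)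
    (H2 : ∀ (a : EuclideanSpace ℝ (Fin n)) (r : ℝ), 0 < r →
      ν (ball a r) ^ e1 * μ (ball a r) ^ e2 ≤ K * volume (ball a r) ^ β)
    (hμ0 : ∀ (a : EuclideanSpace ℝ (Fin n)) (r : ℝ), 0 < r → μ (ball a r) ≠ 0)
    (hμt : ∀ (a : EuclideanSpace ℝ (Fin n)) (r : ℝ), 0 < r → μ (ball a r) ≠ ⊤)
    (a : EuclideanSpace ℝ (Fin n)) (r : ℝ) (hr : 0 < r) (S : Set (EuclideanSpace ℝ (Fin n))) (hS : S ⊆ ball a r) (hSm : MeasurableSet S)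
    (hv : volume (ball a r) ≤ 4 ^ n * volume S) :
    ν (ball a r) ≤ (K * (4 ^ n) ^ β) ^ (1 / e1) * ν S := by
  have h1 : ν (ball a r) ^ e1 * μ (ball a r) ^ e2 ≤
      (K * (4 ^ n) ^ β * ν S ^ e1) * μ (ball a r) ^ e2 := by
    calc _ ≤ K * volume (ball a r) ^ β := H2 a r hr
      _ ≤ K * (4 ^ n * volume S) ^ β := by gcongr
      _ = K * (4 ^ n) ^ β * volume S ^ β := by
          rw [ENNReal.mul_rpow_of_nonneg _ _ hβ.le]; ring
      _ ≤ K * (4 ^ n) ^ β * (ν S ^ e1 * μ S ^ e2) := by gcongr; exact H1 S hSm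
      _ ≤ K * (4 ^ n) ^ β * (ν S ^ e1 * μ (ball a r) ^ e2) := by gcongr
      _ = _ := by ring
  have h2 : ν (ball a r) ^ e1 ≤ K * (4 ^ n) ^ β * ν S ^ e1 := by
    refine (ENNReal.mul_le_mul_iff_left ?_ ?_).mp h1
    · simp [ENNReal.rpow_eq_zero_iff, hμ0 a r hr, hμt a r hr]
    · exact ENNReal.rpow_ne_top_of_nonneg he2.le (hμt a r hr)
  calc ν (ball a r) = (ν (ball a r) ^ e1) ^ (1 / e1) := by
        rw [← ENNReal.rpow_mul, mul_one_div_cancel he1.ne', ENNReal.rpow_one]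
    _ ≤ (K * (4 ^ n) ^ β * ν S ^ e1) ^ (1 / e1) := by gcongr
    _ = _ := by
        rw [ENNReal.mul_rpow_of_nonneg _ _ (by positivity), ← ENNReal.rpow_mul,
          mul_one_div_cancel he1.ne', ENNReal.rpow_one]

theorem good_of (hn : 1 ≤ n) (ν : Measure (EuclideanSpace ℝ (Fin n))) {D : ℝ≥0∞} (hD0 : D ≠ 0) (hDt : D ≠ ⊤)
    (hν0 : ∀ (a : EuclideanSpace ℝ (Fin n)) (r : ℝ), 0 < r → ν (ball a r) ≠ 0)
    (hνt : ∀ (a : EuclideanSpace ℝ (Fin n)) (r : ℝ), 0 < r → ν (ball a r) ≠ ⊤)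
    (H : ∀ (a : EuclideanSpace ℝ (Fin n)) (r : ℝ), 0 < r → ∀ S : Set (EuclideanSpace ℝ (Fin n)), S ⊆ ball a r → MeasurableSet S →
      volume (ball a r) ≤ 4 ^ n * volume S → ν (ball a r) ≤ D * ν S) :
    Good (1 + D⁻¹) D ν := by
  have h4 : ∀ k : ℤ, (0 : ℝ) < 4 ^ k := fun k => by positivity
  refine ⟨fun k x => hν0 x _ (h4 k), fun k x => hνt x _ (h4 k), fun k x => ?_, fun k x y hxy => ?_⟩
  · unfold bm
    have hsub : ball x ((4 : ℝ) ^ k) ⊆ ball x ((4 : ℝ) ^ (k + 1)) :=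
      ball_subset_ball (zpow_le_zpow_right₀ (by norm_num) (by omega))
    have hvol : volume (ball x ((4 : ℝ) ^ (k + 1))) = 4 ^ n * volume (ball x ((4 : ℝ) ^ k)) := by
      rw [vol_ball x (h4 _), vol_ball x (h4 k), zpow_add₀ (by norm_num), zpow_one, mul_comm ((4 : ℝ) ^ k),
        mul_pow, ENNReal.ofReal_mul (by positivity), mul_assoc]
      congr 1
      rw [ENNReal.ofReal_pow (by norm_num)]
      norm_num
    set B := ball x ((4 : ℝ) ^ (k + 1)) with hB
    set B' := ball x ((4 : ℝ) ^ k) with hB'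
    have hsplit : ∀ τ : Measure (EuclideanSpace ℝ (Fin n)), τ B = τ B' + τ (B \ B') := by
      intro τ
      rw [add_comm]
      have := measure_diff_add_inter (μ := τ) B (measurableSet_ball (x := x) (ε := (4 : ℝ) ^ k))
      rw [← hB', inter_eq_self_of_subset_right hsub] at this
      exact this.symm
    have key : ν B ≤ D * ν (B \ B') := by
      refine H x _ (h4 _) _ diff_subset (measurableSet_ball.diff measurableSet_ball) ?_
      have hge : volume B' ≤ volume (B \ B') := by
        have h2 : 2 * volume B' ≤ volume B := by
          rw [hvol]
          gcongr
          calc (2 : ℝ≥0∞) ≤ 4 ^ 1 := by norm_num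
            _ ≤ 4 ^ n := pow_le_pow_right₀ (by norm_num) hn
        rw [hsplit, two_mul] at h2
        exact (ENNReal.add_le_add_iff_left (vol_ball_ne_top _ _)).mp h2
      calc volume B = 4 ^ n * volume B' := hvol
        _ ≤ _ := by gcongr
    have key2 : D⁻¹ * ν B ≤ ν (B \ B') := by
      rw [← ENNReal.div_eq_inv_mul]
      exact ENNReal.div_le_of_le_mul' key
    calc (1 + D⁻¹) * ν B' = ν B' + D⁻¹ * ν B' := by ring
      _ ≤ ν B' + D⁻¹ * ν B := by gcongr
      _ ≤ ν B' + ν (B \ B') := by gcongr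
      _ = _ := (hsplit ν).symm
  · unfold bm
    have hR := h4 k
    set R := (4 : ℝ) ^ k with hRdef
    calc ν (ball x R) ≤ ν (ball y (4 * R)) := measure_mono (ball_subset_ball' (by linarith))
      _ ≤ D * ν (ball y R) := by
        refine H y _ (by positivity) _ (ball_subset_ball (by linarith)) measurableSet_ball ?_
        apply le_of_eq
        rw [vol_ball y hR, vol_ball y (by positivity), mul_pow, ENNReal.ofReal_mul (by positivity),
          mul_assoc, ENNReal.ofReal_pow (by norm_num)]
        norm_num

/-- Domination of the Riesz kernel by the discretised kernel. -/
theorem riesz_le_TK (ν μ : Measure (EuclideanSpace ℝ (Fin n))) {θ D K : ℝ≥0∞} {p' q β γ : ℝ} (hp' : 0 < p') (hq : 0 < q)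
    (hβ : 0 < β) (hγ : n * β = γ) (hγ0 : 0 < γ) (hGμ : Good θ D μ) (hGν : Good θ D ν) (hDt : D ≠ ⊤)
    (hK : K ≠ ⊤)
    (H2 : ∀ (a : EuclideanSpace ℝ (Fin n)) (r : ℝ), 0 < r →
      ν (ball a r) ^ (1 / q) * μ (ball a r) ^ (1 / p') ≤ K * volume (ball a r) ^ β)
    (x y : EuclideanSpace ℝ (Fin n)) (hxy : x ≠ y) :
    (ENNReal.ofReal (dist x y ^ γ))⁻¹ ≤
      (D ^ (1 / p') * K * ENNReal.ofReal (4 ^ γ) * volume (ball (0 : EuclideanSpace ℝ (Fin n)) 1) ^ β) *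
        TK μ ν p' q x y := by
  have hd : 0 < dist x y := dist_pos.mpr hxy
  obtain ⟨k, hk1, hk2⟩ := exists_mem_Ico_zpow hd (show (1 : ℝ) < 4 by norm_num)
  set C := D ^ (1 / p') * K * ENNReal.ofReal (4 ^ γ) * volume (ball (0 : EuclideanSpace ℝ (Fin n)) 1) ^ β with hC
  have h4 : (0 : ℝ) < 4 ^ k := by positivity
  have hTK : bm μ (k + 1) y ^ (-(1 / p')) * bm ν (k + 1) x ^ (-(1 / q)) ≤ TK μ ν p' q x y := by
    refine le_trans ?_ (ENNReal.le_tsum (k + 1))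
    simp [ker, hk2]
  refine le_trans ?_ (mul_le_mul_right hTK C)
  have main : bm μ (k + 1) y ^ (1 / p') * bm ν (k + 1) x ^ (1 / q) ≤
      C * ENNReal.ofReal (dist x y ^ γ) := by
    calc bm μ (k + 1) y ^ (1 / p') * bm ν (k + 1) x ^ (1 / q)
        ≤ (D * bm μ (k + 1) x) ^ (1 / p') * bm ν (k + 1) x ^ (1 / q) := by
          gcongr
          exact hGμ.comp _ _ _ (by rwa [dist_comm])
      _ = D ^ (1 / p') * (bm ν (k + 1) x ^ (1 / q) * bm μ (k + 1) x ^ (1 / p')) := by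
          rw [ENNReal.mul_rpow_of_nonneg _ _ (by positivity)]; ring
      _ ≤ D ^ (1 / p') * (K * volume (ball x ((4 : ℝ) ^ (k + 1))) ^ β) := by
          refine mul_le_mul_right ?_ _
          exact H2 x _ (by positivity)
      _ = C * ENNReal.ofReal (((4 : ℝ) ^ k) ^ γ) := by
          rw [vol_ball_rpow x (by positivity) hβ.le hγ, zpow_add₀ (by norm_num), zpow_one,
            Real.mul_rpow h4.le (by norm_num), ENNReal.ofReal_mul (by positivity), hC]
          ring
      _ ≤ _ := by gcongr
  have a0 : bm μ (k + 1) y ^ (1 / p') ≠ 0 := by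
    simp [ENNReal.rpow_eq_zero_iff, hGμ.pos, hGμ.fin]
  have b0 : bm ν (k + 1) x ^ (1 / q) ≠ 0 := by
    simp [ENNReal.rpow_eq_zero_iff, hGν.pos, hGν.fin]
  have a1 : bm μ (k + 1) y ^ (1 / p') ≠ ⊤ :=
    ENNReal.rpow_ne_top_of_nonneg (by positivity) (hGμ.fin _ _)
  have b1 : bm ν (k + 1) x ^ (1 / q) ≠ ⊤ :=
    ENNReal.rpow_ne_top_of_nonneg (by positivity) (hGν.fin _ _)
  rw [ENNReal.rpow_neg, ENNReal.rpow_neg, ← ENNReal.mul_inv (Or.inl a0) (Or.inl a1)]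
  have hd0 : ENNReal.ofReal (dist x y ^ γ) ≠ 0 := by
    simp; positivity
  rw [← one_div, ENNReal.div_le_iff hd0 ENNReal.ofReal_ne_top, mul_right_comm, ← div_eq_mul_inv,
    ENNReal.le_div_iff_mul_le (Or.inl (mul_ne_zero a0 b0)) (Or.inl (ENNReal.mul_ne_top a1 b1)), one_mul]
  exact main

theorem H1_of (w : (EuclideanSpace ℝ (Fin n)) → ℝ) (hwm : Measurable w) (hw0 : ∀ x, 0 ≤ w x)
    (hwp : ∀ᵐ x ∂(volume : Measure (EuclideanSpace ℝ (Fin n))), 0 < w x) {p' q β : ℝ} (hp' : 0 < p') (hq : 0 < q)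
    (hβ : β = 1 / q + 1 / p') (S : Set (EuclideanSpace ℝ (Fin n))) (hS : MeasurableSet S) :
    volume S ^ β ≤ (volume.withDensity fun x => ENNReal.ofReal (w x ^ q)) S ^ (1 / q) *
      (volume.withDensity fun x => ENNReal.ofReal (w x ^ (-p'))) S ^ (1 / p') := by
  have hβ0 : 0 < β := by rw [hβ]; positivity
  have hconj : (q * β).HolderConjugate (p' * β) := by
    rw [Real.holderConjugate_iff]
    constructor
    · rw [hβ, mul_add, mul_one_div_cancel hq.ne']
      have : 0 < q * (1 / p') := by positivity
      linarith
    · rw [mul_inv, mul_inv, ← add_mul, ← one_div, ← one_div, ← hβ, mul_inv_cancel₀ hβ0.ne']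
  rw [withDensity_apply _ hS, withDensity_apply _ hS]
  have hh := ENNReal.lintegral_mul_le_Lp_mul_Lq (volume.restrict S) hconj
    (f := fun x => ENNReal.ofReal (w x ^ (1 / β))) (g := fun x => ENNReal.ofReal (w x ^ (-(1 / β))))
    (by fun_prop) (by fun_prop)
  have e1 : ∫⁻ x in S, ((fun x => ENNReal.ofReal (w x ^ (1 / β))) *
      (fun x => ENNReal.ofReal (w x ^ (-(1 / β))))) x = volume S := by
    rw [← setLIntegral_one]
    refine lintegral_congr_ae (ae_restrict_of_ae ?_)
    filter_upwards [hwp] with x hx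
    simp only [Pi.mul_apply]
    rw [← ENNReal.ofReal_mul (by positivity), ← Real.rpow_add hx]
    simp
  have e2 : ∀ x, ENNReal.ofReal (w x ^ (1 / β)) ^ (q * β) = ENNReal.ofReal (w x ^ q) := by
    intro x
    rw [ENNReal.ofReal_rpow_of_nonneg (Real.rpow_nonneg (hw0 x) _) (by positivity),
      ← Real.rpow_mul (hw0 x)]
    congr 2
    field_simp
  have e3 : ∀ x, ENNReal.ofReal (w x ^ (-(1 / β))) ^ (p' * β) = ENNReal.ofReal (w x ^ (-p')) := by
    intro x
    rw [ENNReal.ofReal_rpow_of_nonneg (Real.rpow_nonneg (hw0 x) _) (by positivity),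
      ← Real.rpow_mul (hw0 x)]
    congr 2
    field_simp
  simp_rw [e2, e3] at hh
  rw [e1] at hh
  calc volume S ^ β ≤ _ := ENNReal.rpow_le_rpow hh hβ0.le
    _ = _ := by
      rw [ENNReal.mul_rpow_of_nonneg _ _ hβ0.le, ← ENNReal.rpow_mul, ← ENNReal.rpow_mul]
      congr 2 <;> field_simp

end euclid
section final
variable {n : ℕ}

theorem H2_aux {V A B K : ℝ≥0∞} {e1 e2 β : ℝ} (hV0 : V ≠ 0) (hVt : V ≠ ⊤) (he1 : 0 < e1)
    (he2 : 0 < e2) (hβ : β = e1 + e2) (h : (V⁻¹ * A) ^ e1 * (V⁻¹ * B) ^ e2 ≤ K) :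
    A ^ e1 * B ^ e2 ≤ K * V ^ β := by
  have h0 : V ^ β ≠ 0 := by simp [ENNReal.rpow_eq_zero_iff, hV0, hVt]
  have ht : V ^ β ≠ ⊤ := ENNReal.rpow_ne_top_of_nonneg (by rw [hβ]; positivity) hVt
  have e : (V⁻¹ * A) ^ e1 * (V⁻¹ * B) ^ e2 = (A ^ e1 * B ^ e2) / V ^ β := by
    rw [ENNReal.mul_rpow_of_nonneg _ _ he1.le, ENNReal.mul_rpow_of_nonneg _ _ he2.le,
      div_eq_mul_inv, ← ENNReal.inv_rpow, hβ,
      ENNReal.rpow_add _ _ (by simpa using hVt) (by simpa using hV0)]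
    ring
  rw [e, ENNReal.div_le_iff h0 ht] at h
  exact h

theorem near_pt (w f : EuclideanSpace ℝ (Fin n) → ℝ) (hwm : Measurable w) (hfm : Measurable f)
    (hwp : ∀ᵐ x ∂(volume : Measure (EuclideanSpace ℝ (Fin n))), 0 < w x) {p' γ : ℝ}
    (hn : 1 ≤ n) (T : EuclideanSpace ℝ (Fin n) → ℝ≥0∞) (hT : Measurable T) (C1 : ℝ≥0∞)
    (x : EuclideanSpace ℝ (Fin n))
    (hle : ∀ y, x ≠ y → (ENNReal.ofReal (dist x y ^ γ))⁻¹ ≤ C1 * T y)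
    (S : Set (EuclideanSpace ℝ (Fin n))) (hS : MeasurableSet S) :
    ∫⁻ y in S, ENNReal.ofReal |f y| / ENNReal.ofReal (dist x y ^ γ) ≤
      C1 * ∫⁻ y, T y * S.indicator (fun y => ENNReal.ofReal |f y| * ENNReal.ofReal (w y ^ p')) y
        ∂(volume.withDensity fun x => ENNReal.ofReal (w x ^ (-p'))) := by
  have hgm : Measurable
      (S.indicator (fun y => ENNReal.ofReal |f y| * ENNReal.ofReal (w y ^ p'))) :=
    Measurable.indicator (by fun_prop) hS
  have hden := lintegral_withDensity_eq_lintegral_mul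
    (volume : Measure (EuclideanSpace ℝ (Fin n)))
    (f := fun x => ENNReal.ofReal (w x ^ (-p'))) (by fun_prop) (hT.mul hgm)
  simp only [Pi.mul_apply] at hden
  rw [hden, ← lintegral_indicator hS, ← lintegral_const_mul _ (by fun_prop)]
  have : NeZero n := ⟨by omega⟩
  have hne : ∀ᵐ y ∂(volume : Measure (EuclideanSpace ℝ (Fin n))), y ≠ x := by
    have : Nontrivial (EuclideanSpace ℝ (Fin n)) := inferInstance
    exact Measure.ae_ne volume x
  refine lintegral_mono_ae ?_
  filter_upwards [hwp, hne] with y hy hyx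
  by_cases hyS : y ∈ S
  · simp only [indicator_of_mem hyS]
    have e : ENNReal.ofReal (w y ^ (-p')) * ENNReal.ofReal (w y ^ p') = 1 := by
      rw [← ENNReal.ofReal_mul (by positivity), ← Real.rpow_add hy]
      simp
    calc ENNReal.ofReal |f y| / ENNReal.ofReal (dist x y ^ γ)
        = ENNReal.ofReal |f y| * (ENNReal.ofReal (dist x y ^ γ))⁻¹ := by rw [div_eq_mul_inv]
      _ ≤ ENNReal.ofReal |f y| * (C1 * T y) := by
          gcongr; exact hle y (Ne.symm hyx)
      _ = C1 * (T y * ENNReal.ofReal |f y|) *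
          (ENNReal.ofReal (w y ^ (-p')) * ENNReal.ofReal (w y ^ p')) := by rw [e]; ring
      _ = _ := by ring
  · simp [indicator_of_notMem hyS]

theorem g_norm (w f : EuclideanSpace ℝ (Fin n) → ℝ) (hwm : Measurable w) (hfm : Measurable f)
    (hwp : ∀ᵐ x ∂(volume : Measure (EuclideanSpace ℝ (Fin n))), 0 < w x) {p p' : ℝ}
    (hpp : p.HolderConjugate p')
    (S : Set (EuclideanSpace ℝ (Fin n))) (hS : MeasurableSet S) :
    ∫⁻ y, S.indicator (fun y => ENNReal.ofReal |f y| * ENNReal.ofReal (w y ^ p')) y ^ p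
        ∂(volume.withDensity fun x => ENNReal.ofReal (w x ^ (-p'))) =
      ∫⁻ y in S, ENNReal.ofReal |f y| ^ p * ENNReal.ofReal (w y ^ p) := by
  have hgm : Measurable
      (S.indicator (fun y => ENNReal.ofReal |f y| * ENNReal.ofReal (w y ^ p'))) :=
    Measurable.indicator (by fun_prop) hS
  have hp0 := hpp.pos
  rw [lintegral_withDensity_eq_lintegral_mul _ (by fun_prop) (hgm.pow_const p),
    ← lintegral_indicator hS]
  refine lintegral_congr_ae ?_
  filter_upwards [hwp] with y hy
  by_cases hyS : y ∈ S
  · simp only [indicator_of_mem hyS, Pi.mul_apply]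
    rw [ENNReal.mul_rpow_of_nonneg _ _ hp0.le,
      ENNReal.ofReal_rpow_of_pos (x := w y ^ p') (by positivity),
      mul_left_comm, ← ENNReal.ofReal_mul (by positivity), ← Real.rpow_mul hy.le, ← Real.rpow_add hy]
    congr 3
    have := hpp.mul_eq_add
    linarith
  · simp [indicator_of_notMem hyS, hp0]

theorem holder_loc (w f : EuclideanSpace ℝ (Fin n) → ℝ) (hwm : Measurable w) (hfm : Measurable f)
    (hw0 : ∀ x, 0 ≤ w x)
    (hwp : ∀ᵐ x ∂(volume : Measure (EuclideanSpace ℝ (Fin n))), 0 < w x) {p p' : ℝ}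
    (hpp : p.HolderConjugate p')
    (S : Set (EuclideanSpace ℝ (Fin n))) (hS : MeasurableSet S) :
    ∫⁻ y in S, ENNReal.ofReal |f y| ≤ wLp p (fun x => w x ^ p) f S *
      (volume.withDensity fun x => ENNReal.ofReal (w x ^ (-p'))) S ^ (1 / p') := by
  have hh := ENNReal.lintegral_mul_le_Lp_mul_Lq (volume.restrict S) hpp
    (f := fun x => ENNReal.ofReal |f x| * ENNReal.ofReal (w x))
    (g := fun x => ENNReal.ofReal (w x ^ (-1 : ℝ)))
    (by fun_prop) (by fun_prop)
  have hp0 := hpp.pos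
  have hp0' := hpp.symm.pos
  unfold wLp
  rw [withDensity_apply _ hS]
  have e0 : ∫⁻ x in S, ((fun x => ENNReal.ofReal |f x| * ENNReal.ofReal (w x)) *
      (fun x => ENNReal.ofReal (w x ^ (-1 : ℝ)))) x = ∫⁻ y in S, ENNReal.ofReal |f y| := by
    refine lintegral_congr_ae (ae_restrict_of_ae ?_)
    filter_upwards [hwp] with x hx
    simp only [Pi.mul_apply]
    rw [mul_assoc, ← ENNReal.ofReal_mul hx.le, Real.rpow_neg_one, mul_inv_cancel₀ hx.ne']
    simp
  have e1 : ∀ x, (ENNReal.ofReal |f x| * ENNReal.ofReal (w x)) ^ p =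
      ENNReal.ofReal |f x| ^ p * ENNReal.ofReal (w x ^ p) := by
    intro x
    rw [ENNReal.mul_rpow_of_nonneg _ _ hp0.le, ENNReal.ofReal_rpow_of_nonneg (hw0 x) hp0.le]
  have e2 : ∀ x, ENNReal.ofReal (w x ^ (-1 : ℝ)) ^ p' = ENNReal.ofReal (w x ^ (-p')) := by
    intro x
    rw [ENNReal.ofReal_rpow_of_nonneg (Real.rpow_nonneg (hw0 x) _) hp0'.le,
      ← Real.rpow_mul (hw0 x)]
    congr 2
    ring
  simp_rw [e1, e2] at hh
  rw [e0] at hh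
  exact hh

theorem tail_le {t r γ : ℝ} (ht : 0 < t) (hrt : r ≤ t) (hγ : 0 < γ) :
    (ENNReal.ofReal (t ^ γ))⁻¹ ≤ ENNReal.ofReal (2 ^ (γ + 1)) *
      ∫⁻ s in Ioi r, (Ioi t).indicator (fun s => ENNReal.ofReal (s ^ (-γ - 1))) s := by
  have h1 : ENNReal.ofReal ((2 * t) ^ (-γ - 1)) * ENNReal.ofReal t ≤
      ∫⁻ s in Ioi r, (Ioi t).indicator (fun s => ENNReal.ofReal (s ^ (-γ - 1))) s := by
    calc ENNReal.ofReal ((2 * t) ^ (-γ - 1)) * ENNReal.ofReal t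
        = ∫⁻ s in Ioc t (2 * t), ENNReal.ofReal ((2 * t) ^ (-γ - 1)) := by
          rw [setLIntegral_const, Real.volume_Ioc]
          congr 2; ring
      _ ≤ ∫⁻ s in Ioc t (2 * t),
          (Ioi t).indicator (fun s => ENNReal.ofReal (s ^ (-γ - 1))) s := by
          refine setLIntegral_mono' measurableSet_Ioc fun s hs => ?_
          rw [indicator_of_mem (show s ∈ Ioi t from hs.1)]
          refine ENNReal.ofReal_le_ofReal ?_
          exact Real.rpow_le_rpow_of_nonpos (ht.trans hs.1) hs.2 (by linarith)
      _ ≤ _ := lintegral_mono_set fun s hs => lt_of_le_of_lt hrt hs.1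
  refine le_trans ?_ (mul_le_mul_right h1 _)
  rw [← ENNReal.ofReal_mul (by positivity), ← ENNReal.ofReal_mul (by positivity),
    ← ENNReal.ofReal_inv_of_pos (by positivity)]
  refine ENNReal.ofReal_le_ofReal (le_of_eq ?_)
  rw [Real.mul_rpow (by norm_num) ht.le]
  have e : t ^ (-γ - 1) * t = (t ^ γ)⁻¹ := by
    rw [← Real.rpow_neg ht.le, ← Real.rpow_add_one ht.ne']
    congr 1; ring
  rw [mul_assoc, e, ← mul_assoc, ← Real.rpow_add (by norm_num)]
  have : γ + 1 + (-γ - 1) = 0 := by ring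
  rw [this, Real.rpow_zero, one_mul]

theorem far_pt (w f : EuclideanSpace ℝ (Fin n) → ℝ) (hwm : Measurable w) (hfm : Measurable f)
    (hw0 : ∀ x, 0 ≤ w x)
    (hwp : ∀ᵐ x ∂(volume : Measure (EuclideanSpace ℝ (Fin n))), 0 < w x) {p p' q β γ : ℝ}
    {K : ℝ≥0∞} (hK : K ≠ ⊤)
    (hpp : p.HolderConjugate p') (hq : 0 < q) (hβ : 0 < β) (hγ : n * β = γ) (hγ0 : 0 < γ)
    (ν μ : Measure (EuclideanSpace ℝ (Fin n)))
    (hμ : μ = volume.withDensity fun x => ENNReal.ofReal (w x ^ (-p')))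
    (hν0 : ∀ (a : EuclideanSpace ℝ (Fin n)) (r : ℝ), 0 < r → ν (ball a r) ≠ 0)
    (hνt : ∀ (a : EuclideanSpace ℝ (Fin n)) (r : ℝ), 0 < r → ν (ball a r) ≠ ⊤)
    (H2 : ∀ (a : EuclideanSpace ℝ (Fin n)) (r : ℝ), 0 < r →
      ν (ball a r) ^ (1 / q) * μ (ball a r) ^ (1 / p') ≤ K * volume (ball a r) ^ β)
    (a x : EuclideanSpace ℝ (Fin n)) (r : ℝ) (hr : 0 < r) (hx : x ∈ ball a r) :
    ∫⁻ y in (ball a (2 * r))ᶜ, ENNReal.ofReal |f y| / ENNReal.ofReal (dist x y ^ γ) ≤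
      (ENNReal.ofReal (2 ^ γ) * ENNReal.ofReal (2 ^ (γ + 1)) *
        (K * volume (ball (0 : EuclideanSpace ℝ (Fin n)) 1) ^ β)) *
      ∫⁻ s in Ioi r, ν (ball a s) ^ (-(1 / q)) * wLp p (fun x => w x ^ p) f (ball a s) *
        ENNReal.ofReal s⁻¹ := by
  set c := ENNReal.ofReal (2 ^ γ) * ENNReal.ofReal (2 ^ (γ + 1)) with hc
  have hct : c ≠ ⊤ := ENNReal.mul_ne_top ENNReal.ofReal_ne_top ENNReal.ofReal_ne_top
  set G : EuclideanSpace ℝ (Fin n) → ℝ → ℝ≥0∞ := fun y s =>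
    {z : EuclideanSpace ℝ (Fin n) × ℝ | dist z.1 a < z.2}.indicator
      (fun z => ENNReal.ofReal |f z.1| * ENNReal.ofReal (z.2 ^ (-γ - 1))) (y, s) with hG
  have hGm : Measurable (Function.uncurry G) := by
    refine Measurable.indicator (by fun_prop) ?_
    exact measurableSet_lt (by fun_prop) (by fun_prop)
  have hpt : ∀ y ∈ (ball a (2 * r))ᶜ,
      ENNReal.ofReal |f y| / ENNReal.ofReal (dist x y ^ γ) ≤ c * ∫⁻ s in Ioi r, G y s := by
    intro y hy
    have hy' : 2 * r ≤ dist y a := by simpa using hy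
    have hx' : dist x a < r := hx
    set t := dist y a with ht
    have ht0 : 0 < t := by linarith
    have hd : t / 2 ≤ dist x y := by
      have := dist_triangle y x a
      rw [dist_comm y x] at this
      linarith
    have h1 : (ENNReal.ofReal (dist x y ^ γ))⁻¹ ≤
        ENNReal.ofReal (2 ^ γ) * (ENNReal.ofReal (t ^ γ))⁻¹ := by
      rw [← ENNReal.ofReal_inv_of_pos (x := t ^ γ) (by positivity),
        ← ENNReal.ofReal_mul (by positivity), ← ENNReal.ofReal_inv_of_pos (Real.rpow_pos_of_pos (by linarith) _)]
      refine ENNReal.ofReal_le_ofReal ?_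
      calc (dist x y ^ γ)⁻¹ ≤ ((t / 2) ^ γ)⁻¹ := by gcongr
        _ = _ := by rw [Real.div_rpow ht0.le (by norm_num)]; field_simp
    have h2 := tail_le ht0 (show r ≤ t by linarith) hγ0
    have h3 : ∫⁻ s in Ioi r, G y s = ENNReal.ofReal |f y| *
        ∫⁻ s in Ioi r, (Ioi t).indicator (fun s => ENNReal.ofReal (s ^ (-γ - 1))) s := by
      rw [← lintegral_const_mul _ (Measurable.indicator (by fun_prop) measurableSet_Ioi)]
      refine lintegral_congr fun s => ?_
      by_cases hs : t < s
      · simp [hG, indicator, hs, ← ht]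
      · simp [hG, indicator, hs, ← ht]
    rw [h3, div_eq_mul_inv]
    calc _ ≤ ENNReal.ofReal |f y| * (ENNReal.ofReal (2 ^ γ) * (ENNReal.ofReal (2 ^ (γ + 1)) *
        ∫⁻ s in Ioi r, (Ioi t).indicator (fun s => ENNReal.ofReal (s ^ (-γ - 1))) s)) := by
          gcongr
          exact h1.trans (mul_le_mul_right h2 _)
      _ = _ := by rw [hc]; ring
  calc _ ≤ ∫⁻ y in (ball a (2 * r))ᶜ, c * ∫⁻ s in Ioi r, G y s :=
        setLIntegral_mono' measurableSet_ball.compl hpt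
    _ ≤ ∫⁻ y, c * ∫⁻ s in Ioi r, G y s := setLIntegral_le_lintegral _ _
    _ = c * ∫⁻ y, ∫⁻ s in Ioi r, G y s := lintegral_const_mul' _ _ hct
    _ = c * ∫⁻ s in Ioi r, ∫⁻ y, G y s := by
        rw [lintegral_lintegral_swap hGm.aemeasurable]
    _ ≤ c * ∫⁻ s in Ioi r, (K * volume (ball (0 : EuclideanSpace ℝ (Fin n)) 1) ^ β) *
        (ν (ball a s) ^ (-(1 / q)) * wLp p (fun x => w x ^ p) f (ball a s) *
        ENNReal.ofReal s⁻¹) := by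
        refine mul_le_mul_right ?_ _
        refine setLIntegral_mono' measurableSet_Ioi fun s hs => ?_
        have hs0 : 0 < s := hr.trans hs
        have e1 : ∫⁻ y, G y s = (∫⁻ y in ball a s, ENNReal.ofReal |f y|) *
            ENNReal.ofReal (s ^ (-γ - 1)) := by
          rw [← lintegral_mul_const _ (by fun_prop), ← lintegral_indicator measurableSet_ball]
          refine lintegral_congr fun y => ?_
          simp [hG, indicator, mem_ball]
        have e2 : μ (ball a s) ^ (1 / p') ≤
            ν (ball a s) ^ (-(1 / q)) * (K * volume (ball a s) ^ β) := by
          have b0 : ν (ball a s) ^ (1 / q) ≠ 0 := by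
            simp [ENNReal.rpow_eq_zero_iff, hν0 a s hs0, hνt a s hs0]
          have b1 : ν (ball a s) ^ (1 / q) ≠ ⊤ :=
            ENNReal.rpow_ne_top_of_nonneg (by positivity) (hνt a s hs0)
          rw [ENNReal.rpow_neg, mul_comm, ← div_eq_mul_inv,
            ENNReal.le_div_iff_mul_le (Or.inl b0) (Or.inl b1), mul_comm]
          exact H2 a s hs0
        have e3 : ENNReal.ofReal (s ^ γ) * ENNReal.ofReal (s ^ (-γ - 1)) = ENNReal.ofReal s⁻¹ := by
          rw [← ENNReal.ofReal_mul (by positivity), ← Real.rpow_add hs0, ← Real.rpow_neg_one]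
          congr 2; ring
        have e4 := holder_loc w f hwm hfm hw0 hwp hpp (ball a s) measurableSet_ball
        rw [← hμ] at e4
        rw [e1]
        calc _ ≤ (wLp p (fun x => w x ^ p) f (ball a s) *
              (ν (ball a s) ^ (-(1 / q)) * (K * volume (ball a s) ^ β))) *
              ENNReal.ofReal (s ^ (-γ - 1)) := by
              refine mul_le_mul_left (e4.trans (mul_le_mul_right e2 _)) _
          _ = (K * volume (ball (0 : EuclideanSpace ℝ (Fin n)) 1) ^ β) *
              (ν (ball a s) ^ (-(1 / q)) * wLp p (fun x => w x ^ p) f (ball a s) *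
              (ENNReal.ofReal (s ^ γ) * ENNReal.ofReal (s ^ (-γ - 1)))) := by
              rw [vol_ball_rpow a hs0 hβ.le hγ]; ring
          _ = _ := by rw [e3]
    _ ≤ _ := by
        rw [lintegral_const_mul' _ _ (ENNReal.mul_ne_top hK
          (ENNReal.rpow_ne_top_of_nonneg hβ.le (vol_ball_ne_top _ _))), mul_assoc c]

end final
section final2
variable {n : ℕ}

theorem wLp_mono {p : ℝ} (hp : 0 < p) (w f : EuclideanSpace ℝ (Fin n) → ℝ)
    {S S' : Set (EuclideanSpace ℝ (Fin n))} (h : S ⊆ S') : wLp p w f S ≤ wLp p w f S' := by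
  unfold wLp
  exact ENNReal.rpow_le_rpow (lintegral_mono_set h) (by positivity)

theorem near_tail (w f : EuclideanSpace ℝ (Fin n) → ℝ) {p q : ℝ} {D : ℝ≥0∞}
    (hp : 0 < p) (hq : 0 < q) (hD0 : D ≠ 0) (hDt : D ≠ ⊤) (ν : Measure (EuclideanSpace ℝ (Fin n)))
    (a : EuclideanSpace ℝ (Fin n)) (r : ℝ) (hr : 0 < r)
    (hν0 : ν (ball a r) ≠ 0) (hνt : ν (ball a r) ≠ ⊤)
    (hdoub : ν (ball a (4 * r)) ≤ D * ν (ball a r)) :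
    wLp p w f (ball a (2 * r)) ≤ (2 * D ^ (1 / q)) * ν (ball a r) ^ (1 / q) *
      ∫⁻ s in Ioi r, ν (ball a s) ^ (-(1 / q)) * wLp p w f (ball a s) * ENNReal.ofReal s⁻¹ := by
  set W := wLp p w f (ball a (2 * r)) with hW
  set A := (D * ν (ball a r)) ^ (1 / q) with hA
  have hA0 : A ≠ 0 := by
    have : D * ν (ball a r) ≠ 0 := mul_ne_zero hD0 hν0
    have : D * ν (ball a r) ≠ ⊤ := ENNReal.mul_ne_top hDt hνt
    simp [ENNReal.rpow_eq_zero_iff, *]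
  have hAt : A ≠ ⊤ := ENNReal.rpow_ne_top_of_nonneg (by positivity) (ENNReal.mul_ne_top hDt hνt)
  have h1 : A⁻¹ * W * ENNReal.ofReal (4 * r)⁻¹ * ENNReal.ofReal (2 * r) ≤
      ∫⁻ s in Ioi r, ν (ball a s) ^ (-(1 / q)) * wLp p w f (ball a s) * ENNReal.ofReal s⁻¹ := by
    calc A⁻¹ * W * ENNReal.ofReal (4 * r)⁻¹ * ENNReal.ofReal (2 * r)
        = ∫⁻ s in Ioc (2 * r) (4 * r), A⁻¹ * W * ENNReal.ofReal (4 * r)⁻¹ := by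
          rw [setLIntegral_const, Real.volume_Ioc]
          congr 2; ring
      _ ≤ ∫⁻ s in Ioc (2 * r) (4 * r),
          ν (ball a s) ^ (-(1 / q)) * wLp p w f (ball a s) * ENNReal.ofReal s⁻¹ := by
          refine setLIntegral_mono' measurableSet_Ioc fun s hs => ?_
          have hs0 : 0 < s := by linarith [hs.1]
          refine mul_le_mul' (mul_le_mul' ?_ ?_) ?_
          · rw [ENNReal.rpow_neg]
            refine ENNReal.inv_le_inv.mpr (ENNReal.rpow_le_rpow ?_ (by positivity))
            exact (measure_mono (ball_subset_ball hs.2)).trans hdoub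
          · exact wLp_mono hp _ _ (ball_subset_ball hs.1.le)
          · refine ENNReal.ofReal_le_ofReal ?_
            have := hs.2
            gcongr
      _ ≤ _ := lintegral_mono_set fun s hs => by
          have := hs.1
          simp only [mem_Ioi]; linarith
  have e : 2 * (ENNReal.ofReal (4 * r)⁻¹ * ENNReal.ofReal (2 * r)) = 1 := by
    rw [← ENNReal.ofReal_mul (by positivity)]
    have : (4 * r)⁻¹ * (2 * r) = 1 / 2 := by field_simp; norm_num
    rw [this, show (2 : ℝ≥0∞) = ENNReal.ofReal 2 by simp, ← ENNReal.ofReal_mul (by norm_num)]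
    norm_num
  calc W = (A * A⁻¹) * W * (2 * (ENNReal.ofReal (4 * r)⁻¹ * ENNReal.ofReal (2 * r))) := by
        rw [e, ENNReal.mul_inv_cancel hA0 hAt]; ring
    _ = (2 * A) * (A⁻¹ * W * ENNReal.ofReal (4 * r)⁻¹ * ENNReal.ofReal (2 * r)) := by ring
    _ ≤ (2 * A) * _ := mul_le_mul_right h1 _
    _ = _ := by
        rw [hA, ENNReal.mul_rpow_of_nonneg _ _ (by positivity)]; ring

theorem combine (w : EuclideanSpace ℝ (Fin n) → ℝ) (hwm : Measurable w) {q : ℝ} (hq : 1 ≤ q)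
    (F : EuclideanSpace ℝ (Fin n) → ℝ≥0∞) (T : EuclideanSpace ℝ (Fin n) → ℝ≥0∞)
    (hT : Measurable T) (C1 Φ N : ℝ≥0∞) (S : Set (EuclideanSpace ℝ (Fin n)))
    (hS : MeasurableSet S)
    (ν : Measure (EuclideanSpace ℝ (Fin n)))
    (hν : ν = volume.withDensity fun x => ENNReal.ofReal (w x ^ q))
    (hF : ∀ x ∈ S, F x ≤ C1 * T x + Φ)
    (hTN : (∫⁻ x, T x ^ q ∂ν) ^ (1 / q) ≤ N) :
    wLpE q (fun x => w x ^ q) F S ≤ C1 * N + Φ * ν S ^ (1 / q) := by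
  have hq0 : 0 < q := by linarith
  have e : ∫⁻ x in S, (C1 * T x + Φ) ^ q * ENNReal.ofReal (w x ^ q) =
      ∫⁻ x in S, (C1 * T x + Φ) ^ q ∂ν := by
    have hm : Measurable fun x => (C1 * T x + Φ) ^ q := by fun_prop
    rw [hν, restrict_withDensity hS, lintegral_withDensity_eq_lintegral_mul _ (by fun_prop) hm]
    refine lintegral_congr fun x => ?_
    simp only [Pi.mul_apply]
    rw [mul_comm]
  unfold wLpE
  calc (∫⁻ x in S, F x ^ q * ENNReal.ofReal (w x ^ q)) ^ (1 / q)
      ≤ (∫⁻ x in S, (C1 * T x + Φ) ^ q * ENNReal.ofReal (w x ^ q)) ^ (1 / q) := by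
        refine ENNReal.rpow_le_rpow (setLIntegral_mono' hS fun x hx => ?_) (by positivity)
        gcongr
        exact hF x hx
    _ = (∫⁻ x in S, (((fun x => C1 * T x) + (fun _ => Φ) :
        EuclideanSpace ℝ (Fin n) → ℝ≥0∞)) x ^ q ∂ν) ^ (1 / q) := by
        rw [e]; rfl
    _ ≤ (∫⁻ x in S, (C1 * T x) ^ q ∂ν) ^ (1 / q) + (∫⁻ x in S, Φ ^ q ∂ν) ^ (1 / q) :=
        ENNReal.lintegral_Lp_add_le (hT.const_mul C1).aemeasurable aemeasurable_const hq
    _ ≤ C1 * N + Φ * ν S ^ (1 / q) := by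
        refine add_le_add ?_ (le_of_eq ?_)
        · simp_rw [ENNReal.mul_rpow_of_nonneg _ _ hq0.le]
          rw [lintegral_const_mul _ (by fun_prop),
            ENNReal.mul_rpow_of_nonneg _ _ (by positivity), ← ENNReal.rpow_mul,
            mul_one_div_cancel hq0.ne', ENNReal.rpow_one]
          refine mul_le_mul_right (le_trans ?_ hTN) _
          exact ENNReal.rpow_le_rpow (setLIntegral_le_lintegral _ _) (by positivity)
        · rw [setLIntegral_const, ENNReal.mul_rpow_of_nonneg _ _ (by positivity),
            ← ENNReal.rpow_mul, mul_one_div_cancel hq0.ne', ENNReal.rpow_one]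

end final2
set_option maxHeartbeats 2000000 in
theorem statement12_aux {n : ℕ} (α p q p' : ℝ) (hα : 0 < α) (hαn : α < n)
    (hp : 1 < p) (hpn : p < (n : ℝ) / α) (hq : 1 / q = 1 / p - α / n)
    (hp' : 1 / p + 1 / p' = 1)
    (w : EuclideanSpace ℝ (Fin n) → ℝ) (hw : IsWeight w) (hApq : MuckApq p q p' w) :
    ∃ C : ℝ, 0 < C ∧
      ∀ (a : EuclideanSpace ℝ (Fin n)) (r : ℝ) (f : EuclideanSpace ℝ (Fin n) → ℝ),
        0 < r → MemLocWLp p (fun x => w x ^ p) f →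
        wLpE q (fun x => w x ^ q) (fracIntE α f) (ball a r) ≤
          ENNReal.ofReal C * wSet (fun x => w x ^ q) (ball a r) ^ (1 / q) *
            ∫⁻ s in Set.Ioi r,
              wSet (fun x => w x ^ q) (ball a s) ^ (-(1 / q)) *
                wLp p (fun x => w x ^ p) f (ball a s) * ENNReal.ofReal s⁻¹ := by
  obtain ⟨hwm, hw0, -, hwp⟩ := hw
  obtain ⟨C, hC, hA⟩ := hApq
  have hn0 : (0 : ℝ) < n := hα.trans hαn
  have hn : 1 ≤ n := by
    have : 0 < n := by exact_mod_cast hn0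
    omega
  have hp0 : 0 < p := by linarith
  have hαn' : α / n < 1 / p := by
    rw [div_lt_div_iff₀ hn0 hp0]
    rw [lt_div_iff₀ hα] at hpn
    linarith
  have hαn0 : 0 < α / n := by positivity
  have hαn1 : α / n < 1 := by rw [div_lt_one hn0]; exact hαn
  have hp1 : 1 / p < 1 := by rw [div_lt_one hp0]; exact hp
  have hq0 : 0 < q := by
    have : 0 < 1 / q := by rw [hq]; linarith
    exact one_div_pos.mp this
  have hq1 : 1 < q := by
    have : 1 / q < 1 := by rw [hq]; linarith
    rwa [div_lt_one hq0] at this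
  have hpp : p.HolderConjugate p' := by
    rw [Real.holderConjugate_iff]
    exact ⟨hp, by simpa using hp'⟩
  have hp'0 : 0 < p' := hpp.symm.pos
  obtain ⟨q', hqq⟩ : ∃ q' : ℝ, q.HolderConjugate q' := ⟨_, Real.HolderConjugate.conjExponent hq1⟩
  have hqq1 : 1 / q + 1 / q' = 1 := by simpa using hqq.inv_add_inv_eq_one
  have hs : 1 < 1 / p + 1 / q' := by linarith
  set β : ℝ := 1 / q + 1 / p' with hβdef
  have hβ0 : 0 < β := by positivity
  set γ : ℝ := n - α with hγdef
  have hγ0 : 0 < γ := by simp only [hγdef]; linarith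
  have hγ : n * β = γ := by
    have : β = 1 - α / n := by simp only [hβdef]; linarith
    rw [this]; field_simp; rfl
  set ν : Measure (EuclideanSpace ℝ (Fin n)) :=
    volume.withDensity fun x => ENNReal.ofReal (w x ^ q) with hν
  set μ : Measure (EuclideanSpace ℝ (Fin n)) :=
    volume.withDensity fun x => ENNReal.ofReal (w x ^ (-p')) with hμ
  have hνS : ∀ (a : EuclideanSpace ℝ (Fin n)) (r : ℝ),
      wSet (fun x => w x ^ q) (ball a r) = ν (ball a r) := by
    intro a r
    rw [hν, withDensity_apply _ measurableSet_ball, wSet]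
  set K : ℝ≥0∞ := ENNReal.ofReal C with hK
  have hKt : K ≠ ⊤ := ENNReal.ofReal_ne_top
  have H1 : ∀ S : Set (EuclideanSpace ℝ (Fin n)), MeasurableSet S →
      volume S ^ β ≤ ν S ^ (1 / q) * μ S ^ (1 / p') :=
    fun S hS => H1_of w hwm hw0 hwp hp'0 hq0 rfl S hS
  have H2 : ∀ (a : EuclideanSpace ℝ (Fin n)) (r : ℝ), 0 < r →
      ν (ball a r) ^ (1 / q) * μ (ball a r) ^ (1 / p') ≤ K * volume (ball a r) ^ β := by
    intro a r hr
    refine H2_aux (vol_ball_ne_zero a hr) (vol_ball_ne_top a r) (by positivity) (by positivity)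
      hβdef ?_
    rw [hν, hμ, withDensity_apply _ measurableSet_ball, withDensity_apply _ measurableSet_ball]
    exact hA a r hr
  have hprod0 : ∀ (a : EuclideanSpace ℝ (Fin n)) (r : ℝ), 0 < r →
      ν (ball a r) ^ (1 / q) * μ (ball a r) ^ (1 / p') ≠ 0 := by
    intro a r hr h0
    have := H1 (ball a r) measurableSet_ball
    rw [h0, nonpos_iff_eq_zero, ENNReal.rpow_eq_zero_iff] at this
    rcases this with h | h
    · exact vol_ball_ne_zero a hr h.1
    · exact vol_ball_ne_top a r h.1
  have hprodt : ∀ (a : EuclideanSpace ℝ (Fin n)) (r : ℝ), 0 < r →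
      ν (ball a r) ^ (1 / q) * μ (ball a r) ^ (1 / p') ≠ ⊤ := by
    intro a r hr
    refine ne_top_of_le_ne_top (ENNReal.mul_ne_top hKt ?_) (H2 a r hr)
    exact ENNReal.rpow_ne_top_of_nonneg hβ0.le (vol_ball_ne_top a r)
  have hq0' : 0 < 1 / q := by positivity
  have hp0' : 0 < 1 / p' := by positivity
  have hν0 : ∀ (a : EuclideanSpace ℝ (Fin n)) (r : ℝ), 0 < r → ν (ball a r) ≠ 0 := by
    intro a r hr h
    apply hprod0 a r hr
    rw [h, ENNReal.zero_rpow_of_pos hq0', zero_mul]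
  have hμ0 : ∀ (a : EuclideanSpace ℝ (Fin n)) (r : ℝ), 0 < r → μ (ball a r) ≠ 0 := by
    intro a r hr h
    apply hprod0 a r hr
    rw [h, ENNReal.zero_rpow_of_pos hp0', mul_zero]
  have hνt : ∀ (a : EuclideanSpace ℝ (Fin n)) (r : ℝ), 0 < r → ν (ball a r) ≠ ⊤ := by
    intro a r hr h
    apply hprodt a r hr
    rw [h, ENNReal.top_rpow_of_pos hq0', ENNReal.top_mul]
    exact fun h' => hprod0 a r hr (by rw [h', mul_zero])
  have hμt : ∀ (a : EuclideanSpace ℝ (Fin n)) (r : ℝ), 0 < r → μ (ball a r) ≠ ⊤ := by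
    intro a r hr h
    apply hprodt a r hr
    rw [h, ENNReal.top_rpow_of_pos hp0', ENNReal.mul_top]
    exact fun h' => hprod0 a r hr (by rw [h', zero_mul])
  set D1 : ℝ≥0∞ := (K * (4 ^ n) ^ β) ^ (1 / (1 / q)) with hD1
  set D2 : ℝ≥0∞ := (K * (4 ^ n) ^ β) ^ (1 / (1 / p')) with hD2
  have hbase : K * ((4 : ℝ≥0∞) ^ n) ^ β ≠ ⊤ :=
    ENNReal.mul_ne_top hKt (ENNReal.rpow_ne_top_of_nonneg hβ0.le (by simp))
  have c1 := compar ν μ hq0' hp0' hβ0 H1 H2 hμ0 hμt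
  have c2 := compar μ ν hp0' hq0' hβ0 (fun S hS => by rw [mul_comm]; exact H1 S hS)
    (fun a r hr => by rw [mul_comm]; exact H2 a r hr) hν0 hνt
  set D : ℝ≥0∞ := 1 + D1 + D2 with hD
  have hD0 : D ≠ 0 := by simp [hD]
  have hDt : D ≠ ⊤ := by
    simp only [hD, ne_eq, ENNReal.add_eq_top, not_or]
    refine ⟨⟨by simp, ?_⟩, ?_⟩
    · exact ENNReal.rpow_ne_top_of_nonneg (by positivity) hbase
    · exact ENNReal.rpow_ne_top_of_nonneg (by positivity) hbase
  have hD1D : D1 ≤ D := by rw [hD]; exact le_add_right le_add_self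
  have hD2D : D2 ≤ D := by rw [hD]; exact le_add_self
  have d1 : ∀ (a : EuclideanSpace ℝ (Fin n)) (r : ℝ), 0 < r →
      ∀ S : Set (EuclideanSpace ℝ (Fin n)), S ⊆ ball a r → MeasurableSet S →
      volume (ball a r) ≤ 4 ^ n * volume S → ν (ball a r) ≤ D * ν S :=
    fun a r hr S h1 h2 h3 => (c1 a r hr S h1 h2 h3).trans (mul_le_mul_left hD1D _)
  have d2 : ∀ (a : EuclideanSpace ℝ (Fin n)) (r : ℝ), 0 < r →
      ∀ S : Set (EuclideanSpace ℝ (Fin n)), S ⊆ ball a r → MeasurableSet S →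
      volume (ball a r) ≤ 4 ^ n * volume S → μ (ball a r) ≤ D * μ S :=
    fun a r hr S h1 h2 h3 => (c2 a r hr S h1 h2 h3).trans (mul_le_mul_left hD2D _)
  have hGν : Good (1 + D⁻¹) D ν := good_of hn ν hD0 hDt hν0 hνt d1
  have hGμ : Good (1 + D⁻¹) D μ := good_of hn μ hD0 hDt hμ0 hμt d2
  have hθ : 1 < 1 + D⁻¹ := ENNReal.lt_add_right (by simp) (by simpa using hDt)
  have hθt : 1 + D⁻¹ ≠ ⊤ := ENNReal.add_ne_top.mpr ⟨by simp, by simpa using hD0⟩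
  have hdoub : ∀ (a : EuclideanSpace ℝ (Fin n)) (r : ℝ), 0 < r →
      ν (ball a (4 * r)) ≤ D * ν (ball a r) := by
    intro a r hr
    refine d1 a _ (by positivity) _ (ball_subset_ball (by linarith)) measurableSet_ball ?_
    apply le_of_eq
    rw [vol_ball a hr, vol_ball a (by positivity), mul_pow, ENNReal.ofReal_mul (by positivity),
      mul_assoc, ENNReal.ofReal_pow (by norm_num)]
    norm_num
  set V1 : ℝ≥0∞ := volume (ball (0 : EuclideanSpace ℝ (Fin n)) 1) ^ β with hV1
  have hV1t : V1 ≠ ⊤ := ENNReal.rpow_ne_top_of_nonneg hβ0.le (vol_ball_ne_top _ _)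
  set C1 : ℝ≥0∞ := D ^ (1 / p') * K * ENNReal.ofReal (4 ^ γ) * V1 with hC1
  have hC1t : C1 ≠ ⊤ := by
    refine ENNReal.mul_ne_top (ENNReal.mul_ne_top (ENNReal.mul_ne_top ?_ hKt)
      ENNReal.ofReal_ne_top) hV1t
    exact ENNReal.rpow_ne_top_of_nonneg hp0'.le hDt
  set C2 : ℝ≥0∞ := ENNReal.ofReal (2 ^ γ) * ENNReal.ofReal (2 ^ (γ + 1)) * (K * V1) with hC2
  have hC2t : C2 ≠ ⊤ := ENNReal.mul_ne_top
    (ENNReal.mul_ne_top ENNReal.ofReal_ne_top ENNReal.ofReal_ne_top) (ENNReal.mul_ne_top hKt hV1t)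
  set C3 : ℝ≥0∞ := bilC (1 + D⁻¹) D p p' q q' with hC3
  have hC3t : C3 ≠ ⊤ := bilC_ne_top hθ hDt hpp hqq hs
  set C0 : ℝ≥0∞ := C1 * C3 * (2 * D ^ (1 / q)) + C2 with hC0
  have hC0t : C0 ≠ ⊤ := by
    refine ENNReal.add_ne_top.mpr ⟨ENNReal.mul_ne_top (ENNReal.mul_ne_top hC1t hC3t)
      (ENNReal.mul_ne_top (by simp) (ENNReal.rpow_ne_top_of_nonneg hq0'.le hDt)), hC2t⟩
  clear_value C0 C1 C2 C3 V1 D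
  refine ⟨C0.toReal + 1, add_pos_of_nonneg_of_pos ENNReal.toReal_nonneg one_pos, ?_⟩
  intro a r f hr hf
  obtain ⟨hfm, hfl⟩ := hf
  simp only [hνS]
  set J : ℝ≥0∞ := ∫⁻ s in Ioi r, ν (ball a s) ^ (-(1 / q)) *
    wLp p (fun x => w x ^ p) f (ball a s) * ENNReal.ofReal s⁻¹ with hJ
  set W : ℝ≥0∞ := wLp p (fun x => w x ^ p) f (ball a (2 * r)) with hW
  set g : EuclideanSpace ℝ (Fin n) → ℝ≥0∞ := (ball a (2 * r)).indicator
    (fun y => ENNReal.ofReal |f y| * ENNReal.ofReal (w y ^ p')) with hg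
  have hgm : Measurable g := Measurable.indicator (by fun_prop) measurableSet_ball
  have hgt : ∀ x, g x ≠ ⊤ := by
    intro x
    by_cases hx : x ∈ ball a (2 * r)
    · rw [hg, indicator_of_mem hx]
      exact ENNReal.mul_ne_top ENNReal.ofReal_ne_top ENNReal.ofReal_ne_top
    · rw [hg, indicator_of_notMem hx]
      simp
  have hgn : ∫⁻ y, g y ^ p ∂μ =
      ∫⁻ y in ball a (2 * r), ENNReal.ofReal |f y| ^ p * ENNReal.ofReal (w y ^ p) :=
    g_norm w f hwm hfm hwp hpp _ measurableSet_ball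
  have hgW : (∫⁻ y, g y ^ p ∂μ) ^ (1 / p) = W := by
    rw [hgn, hW, wLp]
  have hgf : ∫⁻ y, g y ^ p ∂μ ≠ ⊤ := by
    intro h
    have h2 := hfl a (2 * r) (by positivity)
    rw [← hW, ← hgW, h, ENNReal.top_rpow_of_pos (by positivity)] at h2
    exact lt_irrefl _ h2
  have hst := strong μ ν hθ hθt hD0 hDt hGμ hGν hpp hqq hs g hgm hgt hgf
  rw [hgW, ← hC3] at hst
  have hTgm : Measurable fun x => ∫⁻ y, TK μ ν p' q x y * g y ∂μ :=
    measurable_TKg μ ν p' q g hgm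
  have hpt : ∀ x ∈ ball a r, fracIntE α f x ≤
      C1 * (∫⁻ y, TK μ ν p' q x y * g y ∂μ) + C2 * J := by
    intro x hx
    unfold fracIntE
    rw [← lintegral_add_compl _ (measurableSet_ball (x := a) (ε := 2 * r))]
    refine add_le_add ?_ ?_
    · exact near_pt w f hwm hfm hwp hn (TK μ ν p' q x) (measurable_TK_right μ ν p' q x) C1 x
        (fun y hxy => by
          rw [hC1, hV1]
          exact riesz_le_TK ν μ hp'0 hq0 hβ0 hγ hγ0 hGμ hGν hDt hKt H2 x y hxy)
        _ measurableSet_ball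
    · rw [hC2, hV1]
      exact far_pt w f hwm hfm hw0 hwp hKt hpp hq0 hβ0 hγ hγ0 ν μ hμ hν0 hνt H2 a x r hr hx
  have hcomb := combine w hwm hq1.le (fracIntE α f) _ hTgm C1 (C2 * J) (C3 * W) (ball a r)
    measurableSet_ball ν hν hpt hst
  have hnt : W ≤ (2 * D ^ (1 / q)) * ν (ball a r) ^ (1 / q) * J :=
    near_tail (fun x => w x ^ p) f hp0 hq0 hD0 hDt ν a r hr (hν0 a r hr) (hνt a r hr)
      (hdoub a r hr)
  have hC0le : C0 ≤ ENNReal.ofReal (C0.toReal + 1) := by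
    rw [ENNReal.le_ofReal_iff_toReal_le hC0t
      (add_nonneg ENNReal.toReal_nonneg zero_le_one)]
    linarith
  calc _ ≤ C1 * (C3 * W) + C2 * J * ν (ball a r) ^ (1 / q) := hcomb
    _ ≤ C1 * (C3 * ((2 * D ^ (1 / q)) * ν (ball a r) ^ (1 / q) * J)) +
        C2 * J * ν (ball a r) ^ (1 / q) := by gcongr
    _ = C0 * ν (ball a r) ^ (1 / q) * J := by rw [hC0]; ring
    _ ≤ _ := by gcongr

/-- Let `0 < α < n`, `1 < p < n/α`, `1/q = 1/p − α/n`, `w ∈ A_{p,q}`.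
Then there is `C > 0`, independent of `f`, `a`, `r`, such that for every `a ∈ ℝⁿ`, `r > 0`
and `f ∈ L^{p,w^p}_loc`:
`‖I_α f‖_{L^{q,w^q}(B(a,r))} ≤ C·w^q(B(a,r))^{1/q}·∫_r^∞ w^q(B(a,s))^{-1/q}‖f‖_{L^{p,w^p}(B(a,s))} ds/s`. -/
theorem statement12 {n : ℕ} (α p q p' : ℝ) (hα : 0 < α) (hαn : α < n)
    (hp : 1 < p) (hpn : p < (n : ℝ) / α) (hq : 1 / q = 1 / p - α / n)
    (hp' : 1 / p + 1 / p' = 1)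
    (w : EuclideanSpace ℝ (Fin n) → ℝ) (hw : IsWeight w) (hApq : MuckApq p q p' w) :
    ∃ C : ℝ, 0 < C ∧
      ∀ (a : EuclideanSpace ℝ (Fin n)) (r : ℝ) (f : EuclideanSpace ℝ (Fin n) → ℝ),
        0 < r → MemLocWLp p (fun x => w x ^ p) f →
        wLpE q (fun x => w x ^ q) (fracIntE α f) (ball a r) ≤
          ENNReal.ofReal C * wSet (fun x => w x ^ q) (ball a r) ^ (1 / q) *
            ∫⁻ s in Set.Ioi r,
              wSet (fun x => w x ^ q) (ball a s) ^ (-(1 / q)) *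
                wLp p (fun x => w x ^ p) f (ball a s) * ENNReal.ofReal s⁻¹ := by
  exact statement12_aux α p q p' hα hαn hp hpn hq hp' w hw hApq
end
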